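/- Let B : ℝ³ × [0,T) → ℝ³ be C¹ in time and C² in space, solving the resistivity-free electron MHD system ∂ₜB + ∇×((∇×B)×B) = 0, ∇·B(·,t) = 0, with J = ∇×B, and assume M(τ) := sup_{x∈ℝ³} ‖∇J(x,τ)‖ (operator norm of the spatial Jacobian of J) is finite for each τ and locally integrable in τ. Fix a ∈ ℝ³ and let X(a,·) : [0,T) → ℝ³ be C¹ with X(a,0) = a and ∂ₜX(a,t) = −J(X(a,t),t). If t ∈ (0,T) and B(X(a,τ),τ) ≠ 0 for all τ ∈ [0,t], then |B(a,0)| · exp(−∫₀ᵗ M(τ)dτ) ≤ |B(X(a,t),t)| ≤ |B(a,0)| · exp(∫₀ᵗ M(τ)dτ). -/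

import Mathlib

noncomputable section

open MeasureTheory Real Set
open scoped RealInnerProductSpace

abbrev R3 := EuclideanSpace ℝ (Fin 3)

def toR3 (v : Fin 3 → ℝ) : R3 := (WithLp.equiv 2 (Fin 3 → ℝ)).symm v

/-- j-th partial derivative of a scalar function. -/
def pd (j : Fin 3) (f : R3 → ℝ) (x : R3) : ℝ :=
  fderiv ℝ f x (EuclideanSpace.single j 1)

/-- curl of a vector field on ℝ³. -/
def curl (F : R3 → R3) (x : R3) : R3 :=
  toR3 ![pd 1 (fun y => F y 2) x - pd 2 (fun y => F y 1) x,
         pd 2 (fun y => F y 0) x - pd 0 (fun y => F y 2) x,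
         pd 0 (fun y => F y 1) x - pd 1 (fun y => F y 0) x]

/-- divergence of a vector field on ℝ³. -/
def divg (F : R3 → R3) (x : R3) : ℝ :=
  pd 0 (fun y => F y 0) x + pd 1 (fun y => F y 1) x + pd 2 (fun y => F y 2) x

/-- cross product on ℝ³. -/
def cross (u v : R3) : R3 :=
  toR3 ![u 1 * v 2 - u 2 * v 1, u 2 * v 0 - u 0 * v 2, u 0 * v 1 - u 1 * v 0]

/-- the advective derivative (u·∇)v. -/
def adv (u v : R3 → R3) (x : R3) : R3 :=
  toR3 (fun i => ∑ j, u x j * pd j (fun y => v y i) x)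

/-- B is a pointwise solution of resistivity-free electron MHD at time t. -/
def IsEMHDAt (B : ℝ → R3 → R3) (t : ℝ) (x : R3) : Prop :=
  deriv (fun τ => B τ x) t + curl (fun y => cross (curl (B t) y) (B t y)) x = 0
    ∧ divg (B t) x = 0

open Filter Topology
open scoped NNReal

/-!
The field `B` is transported by the velocity `-J`: since `∇ × (J × B) = (B · ∇)J - (J · ∇)B`, the
derivative of `B` along a trajectory of `-J` is `-(∇J) B`, of norm at most `M |B|`, and Grönwall's
inequality would finish the proof. The difficulty is that `B` is only assumed `C¹` in `t` and `C²`
in `x` *separately*, so that the chain rule may fail and `t ↦ B(X(t), t)` need not even be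
continuous a priori.

Call a time good if the growth estimate holds near it along every trajectory in a fixed ball. The
times at which `B`, `∂ₜB`, `∇B` and the Lipschitz constant of `∇B` are bounded by `N` on the ball
form a closed set, and these sets exhaust all times as `N` grows. If there were bad times, the Baire
category theorem would give a uniform `N` for all bad times near one of them. Near that time `B` is
then absolutely continuous along trajectories: a bad time is joined to another time by moving first
in `t`, then in `x`, then across good times only. Almost every bad time is an accumulation point of
bad times, where the chain rule along the bad times is available, so the growth estimate holds
there after all. The estimate crosses an isolated time `w`, as well as the ends of the time
interval, by applying it to the trajectories through `(σ, Z(w))` and letting `σ → w`.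
-/

theorem rel_of_trans_of_eventually {α : Type*} [ConditionallyCompleteLinearOrder α]
    [TopologicalSpace α] [OrderTopology α] [DenselyOrdered α] {R : α → α → Prop} {a b : α}
    (hab : a ≤ b)
    (htrans : ∀ x ∈ Icc a b, ∀ y ∈ Icc x b, ∀ z ∈ Icc y b, R x y → R y z → R x z)
    (hloc : ∀ w ∈ Icc a b, ∀ᶠ r in 𝓝[Icc a b] w, (w ≤ r → R w r) ∧ (r ≤ w → R r w)) :
    R a b := by
  set S : Set α := {r ∈ Icc a b | R a r}
  have haS : a ∈ S :=
    ⟨left_mem_Icc.2 hab, ((hloc a (left_mem_Icc.2 hab)).self_of_nhdsWithin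
      (left_mem_Icc.2 hab)).1 le_rfl⟩
  have hbdd : BddAbove S := ⟨b, fun r hr => hr.1.2⟩
  have hlub : IsLUB S (sSup S) := isLUB_csSup ⟨a, haS⟩ hbdd
  set w := sSup S
  have hw : w ∈ Icc a b := ⟨hlub.1 haS, hlub.2 fun r hr => hr.1.2⟩
  have haw : R a w := by
    have hev := eventually_nhdsWithin_iff.1 (hloc w hw)
    obtain ⟨r, hrS, hr⟩ :=
      ((hlub.frequently_mem ⟨a, haS⟩).and_eventually (nhdsWithin_le_nhds hev)).exists
    have hrw := hlub.1 hrS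
    exact htrans a (left_mem_Icc.2 hab) r hrS.1 w ⟨hrw, hw.2⟩ hrS.2 ((hr hrS.1).2 hrw)
  rcases hw.2.eq_or_lt with hwb | hwb
  · exact hwb ▸ haw
  · have hne : (𝓝[Ioc w b] w).NeBot := by
      rw [nhdsWithin_Ioc_eq_nhdsGT hwb]; exact nhdsGT_neBot_of_exists_gt ⟨b, hwb⟩
    have hsub : Ioc w b ⊆ Icc a b := fun r hr => ⟨hw.1.trans hr.1.le, hr.2⟩
    obtain ⟨r, hr, hrI⟩ :=
      (((hloc w hw).filter_mono (nhdsWithin_mono w hsub)).and self_mem_nhdsWithin).exists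
    have har : R a r :=
      htrans a (left_mem_Icc.2 hab) w hw r ⟨hrI.1.le, hrI.2⟩ haw (hr.1 hrI.1.le)
    exact absurd (hlub.1 ⟨hsub hrI, har⟩) (not_le.2 hrI.1)

section GrowthBound

variable {F : Type*} [NormedAddCommGroup F] {M : ℝ → ℝ} {φ : ℝ → F} {p q r : ℝ}

theorem abs_integral_of_nonneg_of_le (hM : 0 ≤ M) (hpq : p ≤ q) :
    |∫ σ in p..q, M σ| = ∫ σ in p..q, M σ :=
  abs_of_nonneg (intervalIntegral.integral_nonneg hpq fun σ _ => hM σ)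

theorem abs_integral_comm (M : ℝ → ℝ) (p q : ℝ) :
    |∫ σ in p..q, M σ| = |∫ σ in q..p, M σ| := by
  rw [intervalIntegral.integral_symm, abs_neg]

theorem abs_integral_add_abs_integral (hM : 0 ≤ M) (hint : IntervalIntegrable M volume p q)
    (hr : r ∈ uIcc p q) :
    |∫ σ in p..r, M σ| + |∫ σ in r..q, M σ| = |∫ σ in p..q, M σ| := by
  have hpr := hint.mono_set (uIcc_subset_uIcc_left hr)
  have hrq := hint.mono_set (uIcc_subset_uIcc_right hr)
  rw [← intervalIntegral.integral_add_adjacent_intervals hpr hrq]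
  rcases mem_uIcc.1 hr with ⟨h₁, h₂⟩ | ⟨h₁, h₂⟩
  · exact ((abs_add_eq_add_abs_iff _ _).2 (Or.inl
      ⟨intervalIntegral.integral_nonneg h₁ fun σ _ => hM σ,
        intervalIntegral.integral_nonneg h₂ fun σ _ => hM σ⟩)).symm
  · rw [intervalIntegral.integral_symm r p, intervalIntegral.integral_symm q r]
    exact ((abs_add_eq_add_abs_iff _ _).2 (Or.inr
      ⟨neg_nonpos.2 (intervalIntegral.integral_nonneg h₂ fun σ _ => hM σ),
        neg_nonpos.2 (intervalIntegral.integral_nonneg h₁ fun σ _ => hM σ)⟩)).symm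

theorem abs_integral_add {g : ℝ → ℝ} (hM : 0 ≤ M) (hg : 0 ≤ g)
    (hMint : IntervalIntegrable M volume p q) (hgint : IntervalIntegrable g volume p q) :
    |∫ σ in p..q, (M σ + g σ)| = |∫ σ in p..q, M σ| + |∫ σ in p..q, g σ| := by
  wlog hpq : p ≤ q generalizing p q
  · simpa only [abs_integral_comm _ q p] using this hMint.symm hgint.symm (le_of_not_ge hpq)
  rw [abs_integral_of_nonneg_of_le hM hpq, abs_integral_of_nonneg_of_le hg hpq,
    abs_integral_of_nonneg_of_le (M := fun σ => M σ + g σ) (fun σ => add_nonneg (hM σ) (hg σ)) hpq]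
  exact intervalIntegral.integral_add hMint hgint

theorem abs_integral_le_of_uIcc_subset {p' q' : ℝ} (hM : 0 ≤ M)
    (hint : IntervalIntegrable M volume p q) (hsub : uIcc p' q' ⊆ uIcc p q) :
    |∫ σ in p'..q', M σ| ≤ |∫ σ in p..q, M σ| := by
  refine intervalIntegral.abs_integral_mono_interval ?_ (Eventually.of_forall hM) hint
  rw [uIoc, uIoc]
  obtain ⟨h₁, h₂⟩ := uIcc_subset_uIcc_iff_le.1 hsub
  exact Ioc_subset_Ioc h₁ h₂

theorem norm_integral_le_abs_integral_mul {E : Type*} [NormedAddCommGroup E] [NormedSpace ℝ E]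
    {f : ℝ → E} {C s τ : ℝ} (hM : 0 ≤ M) (hint : IntervalIntegrable M volume p q)
    (hsub : uIcc s τ ⊆ uIcc p q) (hC : 0 ≤ C) (hf : ∀ σ ∈ uIcc s τ, ‖f σ‖ ≤ M σ * C) :
    ‖∫ σ in s..τ, f σ‖ ≤ |∫ σ in p..q, M σ| * C :=
  calc ‖∫ σ in s..τ, f σ‖ ≤ |∫ σ in s..τ, M σ * C| :=
        intervalIntegral.norm_integral_le_abs_of_norm_le
          ((ae_restrict_mem measurableSet_uIoc).mono fun σ hσ => hf σ (uIoc_subset_uIcc hσ))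
          ((hint.mono_set hsub).mul_const C)
    _ = |∫ σ in s..τ, M σ| * C := by
        rw [intervalIntegral.integral_mul_const, abs_mul, abs_of_nonneg hC]
    _ ≤ |∫ σ in p..q, M σ| * C :=
        mul_le_mul_of_nonneg_right (abs_integral_le_of_uIcc_subset hM hint hsub) hC

theorem abs_integral_const_mul_add_const_mul_add_const {g : ℝ → ℝ} {A C D : ℝ} (hM : 0 ≤ M)
    (hg : 0 ≤ g) (hA : 0 ≤ A) (hC : 0 ≤ C) (hD : 0 ≤ D) (hMint : IntervalIntegrable M volume p q)
    (hgint : IntervalIntegrable g volume p q) :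
    |∫ σ in p..q, (A * M σ + C * g σ + D)| =
      A * |∫ σ in p..q, M σ| + C * |∫ σ in p..q, g σ| + D * |q - p| := by
  have hAM : (0 : ℝ → ℝ) ≤ fun σ => A * M σ := fun σ => mul_nonneg hA (hM σ)
  have hCg : (0 : ℝ → ℝ) ≤ fun σ => C * g σ := fun σ => mul_nonneg hC (hg σ)
  rw [abs_integral_add (M := fun σ => A * M σ + C * g σ) (add_nonneg hAM hCg) (fun _ => hD)
    ((hMint.const_mul A).add (hgint.const_mul C)) intervalIntegrable_const,
    abs_integral_add hAM hCg (hMint.const_mul A) (hgint.const_mul C)]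
  simp only [intervalIntegral.integral_const_mul, intervalIntegral.integral_const, smul_eq_mul,
    abs_mul, abs_of_nonneg hA, abs_of_nonneg hC, abs_of_nonneg hD, mul_comm |q - p|]

/-- The Grönwall-type estimate for the increment of `φ` between the times `p` and `q` (in either
order): it is the one satisfied by absolutely continuous solutions of `‖φ'‖ ≤ M ‖φ‖`. -/
def GrowthBound (M : ℝ → ℝ) (φ : ℝ → F) (p q : ℝ) : Prop :=
  ‖φ q - φ p‖ ≤ min ‖φ p‖ ‖φ q‖ * (exp |∫ σ in p..q, M σ| - 1)

namespace GrowthBound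

theorem refl (M : ℝ → ℝ) (φ : ℝ → F) (p : ℝ) : GrowthBound M φ p p := by
  simp [GrowthBound]

theorem symm (h : GrowthBound M φ p q) : GrowthBound M φ q p := by
  rwa [GrowthBound, norm_sub_rev, min_comm, abs_integral_comm]

theorem norm_sub_le (h : GrowthBound M φ p q) :
    ‖φ q - φ p‖ ≤ ‖φ p‖ * (exp |∫ σ in p..q, M σ| - 1) :=
  h.trans (mul_le_mul_of_nonneg_right (min_le_left _ _)
    (sub_nonneg.2 (one_le_exp (abs_nonneg _))))

theorem norm_le (h : GrowthBound M φ p q) : ‖φ q‖ ≤ ‖φ p‖ * exp |∫ σ in p..q, M σ| := by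
  linarith [norm_sub_norm_le (φ q) (φ p), h.norm_sub_le]

theorem norm_sub_le_two_mul {C : ℝ} (h : GrowthBound M φ p q) (hC : ‖φ p‖ ≤ C)
    (hsmall : |∫ σ in p..q, M σ| ≤ 1) : ‖φ q - φ p‖ ≤ 2 * C * |∫ σ in p..q, M σ| := by
  have hexp := (le_abs_self _).trans (abs_exp_sub_one_le (x := |∫ σ in p..q, M σ|) (by simpa))
  rw [abs_abs] at hexp
  calc ‖φ q - φ p‖ ≤ ‖φ p‖ * (exp |∫ σ in p..q, M σ| - 1) := h.norm_sub_le
    _ ≤ C * (2 * |∫ σ in p..q, M σ|) := by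
      gcongr
      · exact sub_nonneg.2 (one_le_exp (abs_nonneg _))
      · exact (norm_nonneg _).trans hC
    _ = 2 * C * |∫ σ in p..q, M σ| := by ring

theorem norm_sub_le_trans (hM : 0 ≤ M) (hint : IntervalIntegrable M volume p q)
    (hr : r ∈ uIcc p q) (hpr : GrowthBound M φ p r) (hrq : GrowthBound M φ r q) :
    ‖φ q - φ p‖ ≤ ‖φ p‖ * (exp |∫ σ in p..q, M σ| - 1) := by
  have hexp := exp_add |∫ σ in p..r, M σ| |∫ σ in r..q, M σ|
  rw [abs_integral_add_abs_integral hM hint hr] at hexp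
  calc ‖φ q - φ p‖ ≤ ‖φ q - φ r‖ + ‖φ r - φ p‖ := norm_sub_le_norm_sub_add_norm_sub ..
    _ ≤ ‖φ r‖ * (exp |∫ σ in r..q, M σ| - 1) + ‖φ p‖ * (exp |∫ σ in p..r, M σ| - 1) :=
      add_le_add hrq.norm_sub_le hpr.norm_sub_le
    _ ≤ ‖φ p‖ * exp |∫ σ in p..r, M σ| * (exp |∫ σ in r..q, M σ| - 1)
        + ‖φ p‖ * (exp |∫ σ in p..r, M σ| - 1) := by
      gcongr
      · exact sub_nonneg.2 (one_le_exp (abs_nonneg _))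
      · exact hpr.norm_le
    _ = ‖φ p‖ * (exp |∫ σ in p..q, M σ| - 1) := by rw [hexp]; ring

theorem trans (hM : 0 ≤ M) (hint : IntervalIntegrable M volume p q) (hr : r ∈ uIcc p q)
    (hpr : GrowthBound M φ p r) (hrq : GrowthBound M φ r q) : GrowthBound M φ p q := by
  rw [GrowthBound, min_mul_of_nonneg _ _ (sub_nonneg.2 (one_le_exp (abs_nonneg _)))]
  refine le_min (norm_sub_le_trans hM hint hr hpr hrq) ?_
  rw [norm_sub_rev, abs_integral_comm]
  exact norm_sub_le_trans hM hint.symm (uIcc_comm p q ▸ hr) hrq.symm hpr.symm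

end GrowthBound

end GrowthBound

section AbsolutelyContinuous

variable {F : Type*} [NormedAddCommGroup F] {f : ℝ → F} {g : ℝ → ℝ} {a b : ℝ}

theorem absolutelyContinuousOnInterval_of_dist_le {X Y : Type*} [PseudoMetricSpace X]
    [PseudoMetricSpace Y] {f : ℝ → X} {g : ℝ → Y}
    (hg : AbsolutelyContinuousOnInterval g a b)
    (h : ∀ s ∈ uIcc a b, ∀ τ ∈ uIcc a b, dist (f s) (f τ) ≤ dist (g s) (g τ)) :
    AbsolutelyContinuousOnInterval f a b := by
  rw [absolutelyContinuousOnInterval_iff] at hg ⊢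
  intro ε hε
  obtain ⟨δ, hδ, hgδ⟩ := hg ε hε
  refine ⟨δ, hδ, fun E hE hlt => (Finset.sum_le_sum fun i hi => ?_).trans_lt (hgδ E hE hlt)⟩
  exact h _ (hE.1 i hi).1 _ (hE.1 i hi).2

theorem absolutelyContinuousOnInterval_of_norm_sub_le_integral
    (hg : IntervalIntegrable g volume a b)
    (h : ∀ s ∈ uIcc a b, ∀ τ ∈ uIcc a b, ‖f τ - f s‖ ≤ |∫ σ in s..τ, g σ|) :
    AbsolutelyContinuousOnInterval f a b := by
  refine absolutelyContinuousOnInterval_of_dist_le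
    (hg.absolutelyContinuousOnInterval_intervalIntegral left_mem_uIcc) fun s hs τ hτ => ?_
  rw [dist_comm, dist_eq_norm, dist_comm, Real.dist_eq, intervalIntegral.integral_interval_sub_left
    (hg.mono_set (uIcc_subset_uIcc_left hτ)) (hg.mono_set (uIcc_subset_uIcc_left hs))]
  exact h s hs τ hτ

theorem norm_sub_le_integral_of_norm_deriv_le [NormedSpace ℝ F] [FiniteDimensional ℝ F]
    (hab : a ≤ b) (hf : AbsolutelyContinuousOnInterval f a b)
    (hg : IntervalIntegrable g volume a b)
    (hderiv : ∀ᵐ t, t ∈ Ioc a b → DifferentiableAt ℝ f t → ‖deriv f t‖ ≤ g t) :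
    ‖f b - f a‖ ≤ ∫ t in a..b, g t := by
  obtain ⟨L, hL, hLv⟩ := exists_dual_vector'' ℝ (f b - f a)
  have hLf : AbsolutelyContinuousOnInterval (fun t => L (f t)) a b :=
    absolutelyContinuousOnInterval_of_dist_le hf fun s _ τ _ => by
      simpa only [one_mul, dist_eq_norm, map_sub] using L.le_of_opNorm_le hL (f s - f τ)
  have hLderiv : ∀ᵐ t, t ∈ Ioc a b → deriv (fun t => L (f t)) t ≤ g t := by
    filter_upwards [hf.boundedVariationOn.ae_differentiableAt_of_mem_uIcc, hderiv]
      with t hdiff hle ht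
    have hft := hdiff (Ioc_subset_Icc_self.trans Icc_subset_uIcc ht)
    have hLft : HasDerivAt (fun t => L (f t)) (L (deriv f t)) t :=
      L.hasFDerivAt.comp_hasDerivAt t hft.hasDerivAt
    rw [hLft.deriv]
    calc L (deriv f t) ≤ ‖L (deriv f t)‖ := le_abs_self _
      _ ≤ 1 * ‖deriv f t‖ := L.le_of_opNorm_le hL _
      _ ≤ g t := (one_mul _).trans_le (hle ht hft)
  calc ‖f b - f a‖ = L (f b) - L (f a) := by rw [← map_sub, hLv]; rfl
    _ = ∫ t in a..b, deriv (fun t => L (f t)) t := hLf.integral_deriv_eq_sub.symm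
    _ ≤ ∫ t in a..b, g t := by
      rw [intervalIntegral.integral_of_le hab, intervalIntegral.integral_of_le hab]
      exact setIntegral_mono_on_ae hLf.intervalIntegrable_deriv.1 hg.1 measurableSet_Ioc hLderiv

theorem norm_sub_le_abs_integral_of_eventually (hg0 : 0 ≤ g)
    (hg : IntervalIntegrable g volume a b)
    (h : ∀ w ∈ uIcc a b, ∀ᶠ r in 𝓝[uIcc a b] w, ‖f r - f w‖ ≤ |∫ σ in w..r, g σ|) :
    ‖f b - f a‖ ≤ |∫ σ in a..b, g σ| := by
  wlog hab : a ≤ b generalizing a b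
  · rw [norm_sub_rev, abs_integral_comm]
    exact this hg.symm (by simpa only [uIcc_comm] using h) (le_of_not_ge hab)
  rw [uIcc_of_le hab] at h
  refine rel_of_trans_of_eventually (R := fun x y => ‖f y - f x‖ ≤ |∫ σ in x..y, g σ|) hab
    (fun x hx y hy z hz hxy hyz => ?_) fun w hw => ?_
  · have hxz : IntervalIntegrable g volume x z :=
      hg.mono_set (uIcc_subset_uIcc (Icc_subset_uIcc hx)
        (Icc_subset_uIcc ⟨(hx.1.trans hy.1).trans hz.1, hz.2⟩))
    rw [← abs_integral_add_abs_integral hg0 hxz (Icc_subset_uIcc ⟨hy.1, hz.1⟩)]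
    exact (norm_sub_le_norm_sub_add_norm_sub _ (f y) _).trans
      ((add_comm _ _).trans_le (add_le_add hxy hyz))
  · filter_upwards [h w hw] with r hr
    exact ⟨fun _ => hr, fun _ => by rwa [norm_sub_rev, abs_integral_comm]⟩

end AbsolutelyContinuous

section Gronwall

theorem tendsto_integral_nhdsWithin {E : Type*} [NormedAddCommGroup E] [NormedSpace ℝ E]
    {f : ℝ → E} {p q w : ℝ} (hf : IntervalIntegrable f volume p q) (hw : w ∈ uIcc p q) :
    Tendsto (fun r => ∫ σ in w..r, f σ) (𝓝[uIcc p q] w) (𝓝 0) := by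
  simpa only [ContinuousWithinAt, intervalIntegral.integral_same] using
    intervalIntegral.continuousOn_primitive_interval' hf hw w hw

variable {F : Type*} [NormedAddCommGroup F] {M : ℝ → ℝ} {φ : ℝ → F} {p q : ℝ}

theorem GrowthBound.of_integral_le {η : ℝ} (hpq : p ≤ q) (hM : 0 ≤ M)
    (hint : IntervalIntegrable M volume p q) (hφ : ContinuousOn φ (Icc p q))
    (h : ∀ s ∈ Icc p q, ∀ τ ∈ Icc p q, ‖φ τ - φ s‖ ≤ |∫ σ in s..τ, M σ * ‖φ σ‖|)
    (hη : η ≤ 1 / 2) (hle : ∫ σ in p..q, M σ ≤ η) :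
    GrowthBound (fun σ => (1 + 2 * η) * M σ) φ p q := by
  have hp := left_mem_Icc.2 hpq
  have hq := right_mem_Icc.2 hpq
  obtain ⟨m, hm, hmax⟩ := isCompact_Icc.exists_isMaxOn ⟨p, hp⟩ hφ.norm
  set I := ∫ σ in p..q, M σ
  have hI0 : 0 ≤ I := intervalIntegral.integral_nonneg hpq fun σ _ => hM σ
  have hη0 : 0 ≤ η := hI0.trans hle
  have hinc : ∀ s ∈ Icc p q, ∀ τ ∈ Icc p q, ‖φ τ - φ s‖ ≤ ‖φ m‖ * I := by
    intro s hs τ hτ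
    have hsub : uIcc s τ ⊆ Icc p q := uIcc_subset_Icc hs hτ
    calc ‖φ τ - φ s‖ ≤ |∫ σ in s..τ, M σ * ‖φ σ‖| := h s hs τ hτ
      _ ≤ |∫ σ in p..q, M σ| * ‖φ m‖ := by
        refine norm_integral_le_abs_integral_mul (f := fun σ => M σ * ‖φ σ‖) hM hint
          (hsub.trans Icc_subset_uIcc) (norm_nonneg _) fun σ hσ => ?_
        rw [norm_mul, norm_norm, Real.norm_of_nonneg (hM σ)]
        exact mul_le_mul_of_nonneg_left (hmax (hsub hσ)) (hM σ)
      _ = ‖φ m‖ * I := by rw [abs_integral_of_nonneg_of_le hM hpq, mul_comm]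
  have hend : ∀ s ∈ Icc p q, ‖φ m‖ * (1 - I) ≤ ‖φ s‖ := fun s hs => by
    linarith [hinc s hs m hm, norm_sub_norm_le (φ m) (φ s)]
  have hmin : ‖φ m‖ * (1 - I) ≤ min ‖φ p‖ ‖φ q‖ := le_min (hend p hp) (hend q hq)
  rw [GrowthBound, intervalIntegral.integral_const_mul, abs_of_nonneg (by positivity)]
  calc ‖φ q - φ p‖ ≤ ‖φ m‖ * I := hinc p hp q hq
    _ ≤ ‖φ m‖ * ((1 - I) * ((1 + 2 * η) * I)) := by
      gcongr
      nlinarith [mul_nonneg hI0 (by nlinarith : 0 ≤ (1 - I) * (1 + 2 * η) - 1)]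
    _ = ‖φ m‖ * (1 - I) * ((1 + 2 * η) * I) := by ring
    _ ≤ min ‖φ p‖ ‖φ q‖ * (exp ((1 + 2 * η) * I) - 1) := by
      gcongr
      linarith [add_one_le_exp ((1 + 2 * η) * I)]

theorem growthBound_of_norm_sub_le_integral (hpq : p ≤ q) (hM : 0 ≤ M)
    (hint : IntervalIntegrable M volume p q) (hφ : ContinuousOn φ (Icc p q))
    (h : ∀ s ∈ Icc p q, ∀ τ ∈ Icc p q, ‖φ τ - φ s‖ ≤ |∫ σ in s..τ, M σ * ‖φ σ‖|) :
    GrowthBound M φ p q := by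
  have hsub : ∀ x ∈ Icc p q, ∀ y ∈ Icc p q, IntervalIntegrable M volume x y := fun x hx y hy =>
    hint.mono_set ((uIcc_subset_Icc hx hy).trans Icc_subset_uIcc)
  have hη : ∀ η ∈ Ioc (0 : ℝ) (1 / 2), GrowthBound (fun σ => (1 + 2 * η) * M σ) φ p q := by
    intro η hη
    have hM' : (0 : ℝ → ℝ) ≤ fun σ => (1 + 2 * η) * M σ := fun σ =>
      mul_nonneg (by linarith [hη.1]) (hM σ)
    have hpiece : ∀ x ∈ Icc p q, ∀ y ∈ Icc p q, x ≤ y → |∫ σ in x..y, M σ| < η →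
        GrowthBound (fun σ => (1 + 2 * η) * M σ) φ x y := fun x hx y hy hxy hlt =>
      .of_integral_le hxy hM (hsub x hx y hy) (hφ.mono (Icc_subset_Icc hx.1 hy.2))
        (fun s hs τ hτ => h s ⟨hx.1.trans hs.1, hs.2.trans hy.2⟩ τ
          ⟨hx.1.trans hτ.1, hτ.2.trans hy.2⟩) hη.2 ((le_abs_self _).trans hlt.le)
    refine rel_of_trans_of_eventually hpq (fun x hx y hy z hz hxy hyz => ?_) fun w hw => ?_
    · exact .trans hM' ((hsub x hx z ⟨(hx.1.trans hy.1).trans hz.1, hz.2⟩).const_mul _)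
        (Icc_subset_uIcc ⟨hy.1, hz.1⟩) hxy hyz
    · have hsmall := (tendsto_integral_nhdsWithin hint (Icc_subset_uIcc hw)).abs.eventually_lt_const
        (abs_zero.trans_lt hη.1)
      rw [uIcc_of_le hpq] at hsmall
      filter_upwards [hsmall, self_mem_nhdsWithin] with r hr hrI
      exact ⟨fun hwr => hpiece w hw r hrI hwr hr,
        fun hrw => hpiece r hrI w hw hrw ((abs_integral_comm M r w).trans_lt hr)⟩
  have hlim : Tendsto (fun η : ℝ =>
      min ‖φ p‖ ‖φ q‖ * (exp |(1 + 2 * η) * ∫ σ in p..q, M σ| - 1)) (𝓝[>] 0)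
      (𝓝 (min ‖φ p‖ ‖φ q‖ * (exp |∫ σ in p..q, M σ| - 1))) := by
    refine tendsto_nhdsWithin_of_tendsto_nhds (Continuous.tendsto' (by fun_prop) _ _ (by simp))
  refine ge_of_tendsto hlim ?_
  filter_upwards [Ioc_mem_nhdsGT (show (0 : ℝ) < 1 / 2 by norm_num)] with η h
  simpa only [GrowthBound, intervalIntegral.integral_const_mul] using hη η h

theorem growthBound_of_norm_deriv_le [NormedSpace ℝ F] [FiniteDimensional ℝ F] (hM : 0 ≤ M)
    (hint : IntervalIntegrable M volume p q) (hφ : AbsolutelyContinuousOnInterval φ p q)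
    (hderiv : ∀ᵐ t, t ∈ uIoc p q → DifferentiableAt ℝ φ t → ‖deriv φ t‖ ≤ M t * ‖φ t‖) :
    GrowthBound M φ p q := by
  wlog hpq : p ≤ q generalizing p q
  · exact (this hint.symm hφ.symm (by simpa only [uIoc_comm] using hderiv)
      (le_of_not_ge hpq)).symm
  have hnonneg : (0 : ℝ → ℝ) ≤ fun σ => M σ * ‖φ σ‖ := fun σ =>
    mul_nonneg (hM σ) (norm_nonneg _)
  have hφM : IntervalIntegrable (fun σ => M σ * ‖φ σ‖) volume p q :=
    hint.mul_continuousOn hφ.continuousOn.norm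
  have hord : ∀ s ∈ Icc p q, ∀ τ ∈ Icc p q, s ≤ τ →
      ‖φ τ - φ s‖ ≤ |∫ σ in s..τ, M σ * ‖φ σ‖| := fun s hs τ hτ hsτ => by
    have hsub : uIcc s τ ⊆ uIcc p q := (uIcc_subset_Icc hs hτ).trans Icc_subset_uIcc
    rw [abs_integral_of_nonneg_of_le hnonneg hsτ]
    refine norm_sub_le_integral_of_norm_deriv_le hsτ (hφ.mono hsub) (hφM.mono_set hsub) ?_
    filter_upwards [hderiv] with t ht hts
    exact ht (uIoc_of_le hpq ▸ Ioc_subset_Ioc hs.1 hτ.2 hts)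
  refine growthBound_of_norm_sub_le_integral hpq hM hint
    (uIcc_of_le hpq ▸ hφ.continuousOn) fun s hs τ hτ => ?_
  rcases le_total s τ with hsτ | hτs
  · exact hord s hs τ hτ hsτ
  · rw [norm_sub_rev, abs_integral_comm]
    exact hord τ hτ s hs hτs

end Gronwall

section Velocity

theorem aestronglyMeasurable_comp_of_ae_continuous {α X Y : Type*} [MeasurableSpace α]
    {μ : Measure α} [TopologicalSpace X] [TopologicalSpace Y]
    [TopologicalSpace.PseudoMetrizableSpace Y] {V : α → X → Y} {Z : α → X}
    (hV : ∀ x, AEStronglyMeasurable (fun t => V t x) μ) (hcont : ∀ᵐ t ∂μ, Continuous (V t))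
    (hZ : AEStronglyMeasurable Z μ) : AEStronglyMeasurable (fun t => V t (Z t)) μ := by
  obtain ⟨Z', hZ', hZZ'⟩ := hZ
  have hsimple : ∀ s : SimpleFunc α X, AEStronglyMeasurable (fun t => V t (s t)) μ := by
    intro s
    have hcover : ⋃ x : s.range, s ⁻¹' {(x : X)} = univ :=
      eq_univ_of_forall fun t => mem_iUnion.2 ⟨⟨s t, s.mem_range_self t⟩, rfl⟩
    rw [← Measure.restrict_univ (μ := μ), ← hcover, aestronglyMeasurable_iUnion_iff]
    refine fun x => ((hV x).mono_measure Measure.restrict_le_self).congr ?_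
    filter_upwards [ae_restrict_mem (s.measurableSet_fiber x)] with t ht
    rw [ht]
  refine aestronglyMeasurable_of_tendsto_ae atTop (fun n => hsimple (hZ'.approx n)) ?_
  filter_upwards [hcont, hZZ'] with t ht hZt
  rw [hZt]
  exact (ht.tendsto _).comp (hZ'.tendsto_approx t)

variable {E : Type*} [NormedAddCommGroup E]
  {V : ℝ → E → E} {M : ℝ → ℝ} {Z Y : ℝ → E} {a b p q s τ : ℝ}

/-- A time-dependent velocity field satisfying the Carathéodory conditions between the times `a`
and `b` (in either order): it is integrable in time, and `M t` is a Lipschitz constant of `V t` that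
is integrable in time. -/
structure IsCaratheodoryVelocity (V : ℝ → E → E) (M : ℝ → ℝ) (a b : ℝ) : Prop where
  nonneg : 0 ≤ M
  intervalIntegrable_bound : IntervalIntegrable M volume a b
  intervalIntegrable : ∀ x, IntervalIntegrable (fun t => V t x) volume a b
  norm_sub_le : ∀ t ∈ uIcc a b, ∀ x y, ‖V t x - V t y‖ ≤ M t * ‖x - y‖

namespace IsCaratheodoryVelocity

theorem mono (hV : IsCaratheodoryVelocity V M a b) (h : uIcc p q ⊆ uIcc a b) :
    IsCaratheodoryVelocity V M p q :=
  ⟨hV.nonneg, hV.intervalIntegrable_bound.mono_set h, fun x => (hV.intervalIntegrable x).mono_set h,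
    fun t ht => hV.norm_sub_le t (h ht)⟩

theorem continuous (hV : IsCaratheodoryVelocity V M a b) {t : ℝ} (ht : t ∈ uIcc a b) :
    Continuous (V t) :=
  (LipschitzWith.of_dist_le' fun x y => by
    simpa only [dist_eq_norm] using hV.norm_sub_le t ht x y).continuous

theorem intervalIntegrable_comp (hV : IsCaratheodoryVelocity V M a b)
    (hZ : ContinuousOn Z (uIcc a b)) : IntervalIntegrable (fun t => V t (Z t)) volume a b := by
  obtain ⟨C, hC⟩ := isCompact_uIcc.exists_bound_of_continuousOn hZ
  have hbound : IntervalIntegrable (fun t => ‖V t 0‖ + M t * C) volume a b :=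
    (hV.intervalIntegrable 0).norm.add (hV.intervalIntegrable_bound.mul_const C)
  have hmem : ∀ᵐ t ∂volume.restrict (uIoc a b), t ∈ uIcc a b :=
    (ae_restrict_mem measurableSet_uIoc).mono fun t ht => uIoc_subset_uIcc ht
  refine hbound.mono_fun' ?_ (hmem.mono fun t ht => ?_)
  · refine aestronglyMeasurable_comp_of_ae_continuous
      (fun x => (intervalIntegrable_iff.1 (hV.intervalIntegrable x)).aestronglyMeasurable)
      (hmem.mono fun t ht => hV.continuous ht) ?_
    exact (hZ.mono uIoc_subset_uIcc).aestronglyMeasurable measurableSet_uIoc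
  · calc ‖V t (Z t)‖ ≤ ‖V t 0‖ + ‖V t (Z t) - V t 0‖ := norm_le_norm_add_norm_sub' _ _
      _ ≤ ‖V t 0‖ + M t * C := by
        gcongr
        refine (hV.norm_sub_le t ht _ _).trans ?_
        rw [sub_zero]
        exact mul_le_mul_of_nonneg_left (hC t ht) (hV.nonneg t)

end IsCaratheodoryVelocity

variable [NormedSpace ℝ E]

/-- `Z` solves `Z' = V t Z` between the times `a` and `b` (in either order), in the integrated form
that suits a velocity which is merely measurable in time. -/
structure IsTrajectory (V : ℝ → E → E) (Z : ℝ → E) (a b : ℝ) : Prop where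
  continuousOn : ContinuousOn Z (uIcc a b)
  sub_eq : ∀ s ∈ uIcc a b, ∀ τ ∈ uIcc a b, Z τ - Z s = ∫ σ in s..τ, V σ (Z σ)

theorem IsTrajectory.mono (hZ : IsTrajectory V Z a b) (h : uIcc p q ⊆ uIcc a b) :
    IsTrajectory V Z p q :=
  ⟨hZ.continuousOn.mono h, fun s hs τ hτ => hZ.sub_eq s (h hs) τ (h hτ)⟩

theorem IsTrajectory.symm (hZ : IsTrajectory V Z a b) : IsTrajectory V Z b a :=
  hZ.mono (uIcc_comm b a).subset

namespace IsCaratheodoryVelocity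

theorem norm_integral_sub_integral_le (hV : IsCaratheodoryVelocity V M a b) {D : ℝ}
    (hZ : ContinuousOn Z (uIcc a b)) (hY : ContinuousOn Y (uIcc a b))
    (hD : ∀ σ ∈ uIcc a b, ‖Z σ - Y σ‖ ≤ D) (hs : s ∈ uIcc a b) (hτ : τ ∈ uIcc a b) :
    ‖(∫ σ in s..τ, V σ (Z σ)) - ∫ σ in s..τ, V σ (Y σ)‖ ≤ |∫ σ in a..b, M σ| * D := by
  have hsub : uIcc s τ ⊆ uIcc a b := uIcc_subset_uIcc hs hτ
  rw [← intervalIntegral.integral_sub ((hV.mono hsub).intervalIntegrable_comp (hZ.mono hsub))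
    ((hV.mono hsub).intervalIntegrable_comp (hY.mono hsub))]
  refine norm_integral_le_abs_integral_mul hV.nonneg hV.intervalIntegrable_bound hsub
    ((norm_nonneg _).trans (hD s hs)) fun σ hσ => (hV.norm_sub_le σ (hsub hσ) _ _).trans ?_
  exact mul_le_mul_of_nonneg_left (hD σ (hsub hσ)) (hV.nonneg σ)

theorem norm_sub_le_two_mul (hV : IsCaratheodoryVelocity V M a b) (hZ : IsTrajectory V Z a b)
    (hY : IsTrajectory V Y a b) (hsmall : |∫ σ in a..b, M σ| ≤ 1 / 2) (hs : s ∈ uIcc a b)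
    (hτ : τ ∈ uIcc a b) : ‖Z τ - Y τ‖ ≤ 2 * ‖Z s - Y s‖ := by
  obtain ⟨r, hr, hmax⟩ := isCompact_uIcc.exists_isMaxOn ⟨s, hs⟩
    (hZ.continuousOn.sub hY.continuousOn).norm
  have hinc : ‖(Z r - Z s) - (Y r - Y s)‖ ≤ 1 / 2 * ‖Z r - Y r‖ := by
    rw [hZ.sub_eq s hs r hr, hY.sub_eq s hs r hr]
    exact (hV.norm_integral_sub_integral_le hZ.continuousOn hY.continuousOn
      (fun σ hσ => hmax hσ) hs hr).trans (mul_le_mul_of_nonneg_right hsmall (norm_nonneg _))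
  have htri : ‖Z r - Y r‖ ≤ ‖Z s - Y s‖ + ‖(Z r - Z s) - (Y r - Y s)‖ :=
    (norm_add_le _ _).trans_eq' (congrArg norm (by abel))
  have hτr : ‖Z τ - Y τ‖ ≤ ‖Z r - Y r‖ := hmax hτ
  linarith

theorem exists_isTrajectory [CompleteSpace E] (hV : IsCaratheodoryVelocity V M a b)
    (hsmall : |∫ σ in a..b, M σ| ≤ 1 / 2) (hs : s ∈ uIcc a b) (z : E) :
    ∃ Y, IsTrajectory V Y a b ∧ Y s = z := by
  have : CompactSpace (uIcc a b) := isCompact_iff_compactSpace.1 isCompact_uIcc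
  let ext (f : C(uIcc a b, E)) : ℝ → E := IccExtend min_le_max f
  have hext : ∀ f : C(uIcc a b, E), ∀ τ (hτ : τ ∈ uIcc a b), ext f τ = f ⟨τ, hτ⟩ :=
    fun f τ hτ => IccExtend_of_mem _ _ hτ
  have hcont : ∀ f, ContinuousOn (ext f) (uIcc a b) :=
    fun f => (f.continuous.Icc_extend' (h := min_le_max)).continuousOn
  have hint : ∀ f, ∀ τ ∈ uIcc a b, IntervalIntegrable (fun σ => V σ (ext f σ)) volume s τ :=
    fun f τ hτ => (hV.intervalIntegrable_comp (hcont f)).mono_set (uIcc_subset_uIcc hs hτ)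
  let Φ : C(uIcc a b, E) → C(uIcc a b, E) := fun f =>
    ⟨fun τ => z + ∫ σ in s..τ, V σ (ext f σ), continuous_const.add
      (continuousOn_iff_continuous_domRestrict.1
        (intervalIntegral.continuousOn_primitive_interval'
          (hV.intervalIntegrable_comp (hcont f)) hs))⟩
  have hΦ : ContractingWith (1 / 2 : NNReal) Φ := by
    refine ⟨by rw [← NNReal.coe_lt_coe]; norm_num, LipschitzWith.of_dist_le_mul fun f g => ?_⟩
    refine (ContinuousMap.dist_le (by positivity)).2 fun τ => ?_
    refine (dist_add_left z _ _).trans_le ?_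
    rw [dist_eq_norm]
    refine (hV.norm_integral_sub_integral_le (hcont f) (hcont g) (D := dist f g)
      (fun σ hσ => ?_) hs τ.2).trans ?_
    · rw [hext f σ hσ, hext g σ hσ, ← dist_eq_norm]
      exact ContinuousMap.dist_apply_le_dist _
    · push_cast
      exact mul_le_mul_of_nonneg_right hsmall dist_nonneg
  set f := hΦ.fixedPoint
  have hval : ∀ τ ∈ uIcc a b, ext f τ = z + ∫ σ in s..τ, V σ (ext f σ) := fun τ hτ => by
    rw [hext f τ hτ]
    exact (DFunLike.congr_fun hΦ.fixedPoint_isFixedPt.eq ⟨τ, hτ⟩).symm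
  refine ⟨ext f, ⟨hcont f, fun σ hσ τ hτ => ?_⟩, by simp [hval s hs]⟩
  rw [hval σ hσ, hval τ hτ, add_sub_add_left_eq_sub]
  exact intervalIntegral.integral_interval_sub_left (hint f τ hτ) (hint f σ hσ)

theorem exists_isTrajectory_tendstoUniformlyOn [CompleteSpace E]
    (hV : IsCaratheodoryVelocity V M a b) (hsmall : |∫ σ in a..b, M σ| ≤ 1 / 2)
    (hZ : IsTrajectory V Z a b) :
    ∃ Y : ℝ → ℝ → E, (∀ σ ∈ uIcc a b, IsTrajectory V (Y σ) a b ∧ Y σ σ = Z a) ∧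
      TendstoUniformlyOn Y Z (𝓝[uIcc a b] a) (uIcc a b) := by
  choose! Y hY hYZ using fun σ (hσ : σ ∈ uIcc a b) => hV.exists_isTrajectory hsmall hσ (Z a)
  refine ⟨Y, fun σ hσ => ⟨hY σ hσ, hYZ σ hσ⟩, Metric.tendstoUniformlyOn_iff.2 fun ε hε => ?_⟩
  filter_upwards [Metric.tendsto_nhds.1 (hZ.continuousOn a left_mem_uIcc) (ε / 2) (half_pos hε),
    self_mem_nhdsWithin] with σ hσε hσ τ hτ
  rw [dist_eq_norm] at hσε ⊢
  have hle := hV.norm_sub_le_two_mul hZ (hY σ hσ) hsmall hσ hτ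
  rw [hYZ σ hσ] at hle
  linarith

end IsCaratheodoryVelocity

end Velocity

section GrowthOn

variable {E F : Type*} [NormedAddCommGroup E] [NormedSpace ℝ E] [NormedAddCommGroup F]
  {B : ℝ → E → F} {V : ℝ → E → E} {M : ℝ → ℝ} {U : Set E} {I J : Set ℝ} {Z : ℝ → E}
  {p q r w : ℝ}

/-- Along every trajectory of `V` that runs in `U` during a time interval contained in `I`, the
field `B` obeys the growth estimate with rate `M`. -/
def GrowthOn (B : ℝ → E → F) (V : ℝ → E → E) (M : ℝ → ℝ) (U : Set E) (I : Set ℝ) : Prop :=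
  ∀ p q, uIcc p q ⊆ I → ∀ Z, IsTrajectory V Z p q → MapsTo Z (uIcc p q) U →
    GrowthBound M (fun τ => B τ (Z τ)) p q

/-- The times in whose neighbourhood the growth estimate holds. -/
def growthTimes (B : ℝ → E → F) (V : ℝ → E → E) (M : ℝ → ℝ) (U : Set E) : Set ℝ :=
  {t | ∃ I ∈ 𝓝 t, GrowthOn B V M U I}

theorem GrowthOn.mono (h : GrowthOn B V M U J) (hIJ : I ⊆ J) : GrowthOn B V M U I :=
  fun p q hpq => h p q (hpq.trans hIJ)

theorem isOpen_growthTimes : IsOpen (growthTimes B V M U) := by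
  refine isOpen_iff_mem_nhds.2 fun t ⟨I, hI, h⟩ => ?_
  filter_upwards [eventually_mem_nhds_iff.2 hI] with s hs using ⟨I, hs, h⟩

theorem eventually_uIcc_subset {s : Set ℝ} (hs : s ∈ 𝓝 w) : ∀ᶠ r in 𝓝 w, uIcc w r ⊆ s := by
  obtain ⟨ε, hε, hball⟩ := Metric.mem_nhds_iff.1 hs
  filter_upwards [Metric.ball_mem_nhds w hε] with r hr
  exact ((convex_ball w ε).ordConnected.uIcc_subset (Metric.mem_ball_self hε) hr).trans hball

theorem growthOn_growthTimes (hM : 0 ≤ M)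
    (hint : ∀ p q, uIcc p q ⊆ I → IntervalIntegrable M volume p q)
    (hI : I ⊆ growthTimes B V M U) : GrowthOn B V M U I := by
  intro p q hpqI Z hZ hZU
  wlog hpq : p ≤ q generalizing p q
  · rw [uIcc_comm] at hpqI hZU
    exact (this q p hpqI hZ.symm hZU (le_of_not_ge hpq)).symm
  have hsub : ∀ x ∈ Icc p q, ∀ y ∈ Icc p q, uIcc x y ⊆ uIcc p q := fun x hx y hy =>
    (uIcc_subset_Icc hx hy).trans Icc_subset_uIcc
  refine rel_of_trans_of_eventually hpq (fun x hx y hy z hz hxy hyz => ?_) fun w hw => ?_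
  · exact .trans hM (hint x z
      ((hsub x hx z ⟨(hx.1.trans hy.1).trans hz.1, hz.2⟩).trans hpqI))
      (Icc_subset_uIcc ⟨hy.1, hz.1⟩) hxy hyz
  · obtain ⟨J, hJ, hgrow⟩ := hI (hpqI (Icc_subset_uIcc hw))
    filter_upwards [nhdsWithin_le_nhds (eventually_uIcc_subset hJ), self_mem_nhdsWithin]
      with r hr hrI
    have hwr : GrowthBound M (fun τ => B τ (Z τ)) w r :=
      hgrow w r hr Z (hZ.mono (hsub w hw r hrI)) (hZU.mono_left (hsub w hw r hrI))
    exact ⟨fun _ => hwr, fun _ => hwr.symm⟩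

theorem uIcc_subset_uIcc_sdiff_singleton {σ : ℝ} (hσ : σ ∈ uIcc w r \ {w}) :
    uIcc σ r ⊆ uIcc w r \ {w} := by
  refine subset_sdiff_singleton (uIcc_subset_uIcc_right hσ.1) fun hw => hσ.2 ?_
  rcases mem_uIcc.1 hσ.1 with h | h <;> rcases mem_uIcc.1 hw with h' | h' <;>
    exact mem_singleton_iff.2 (by linarith [h.1, h.2, h'.1, h'.2])

/- A trajectory cannot be compared with its own restrictions, because `B` need not be continuous
along it at `w`. The trajectories through the points `(σ, Z w)` can be, since `B σ (Z w)` does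
converge. -/
theorem GrowthOn.growthBound_of_integral_le [CompleteSpace E]
    (hgrow : GrowthOn B V M U (uIcc w r \ {w})) (hV : IsCaratheodoryVelocity V M w r)
    (hU : IsOpen U) (hBw : ContinuousWithinAt (fun t => B t (Z w)) (uIcc w r) w)
    (hBr : Continuous (B r)) (hsmall : |∫ σ in w..r, M σ| ≤ 1 / 2)
    (hZ : IsTrajectory V Z w r) (hZU : MapsTo Z (uIcc w r) U) :
    GrowthBound M (fun τ => B τ (Z τ)) w r := by
  rcases eq_or_ne w r with rfl | hwr
  · exact .refl ..
  obtain ⟨Y, hY, hYZ⟩ := hV.exists_isTrajectory_tendstoUniformlyOn hsmall hZ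
  set l := 𝓝[uIcc w r \ {w}] w
  have hl : l ≤ 𝓝[uIcc w r] w := nhdsWithin_mono _ sdiff_subset
  have : l.NeBot := accPt_principal_iff_nhdsWithin.1
    (uniqueDiffWithinAt_iff_accPt.1 (uniqueDiffOn_uIcc hwr w left_mem_uIcc))
  have hYr : Tendsto (fun σ => Y σ r) l (𝓝 (Z r)) := (hYZ.tendsto_at right_mem_uIcc).mono_left hl
  have hMlim : Tendsto (fun σ => ∫ τ in σ..r, M τ) l (𝓝 (∫ τ in w..r, M τ)) := by
    simpa only [intervalIntegral.integral_symm r] using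
      ((intervalIntegral.continuousOn_primitive_interval' hV.intervalIntegrable_bound
        right_mem_uIcc w left_mem_uIcc).mono_left hl).neg
  obtain ⟨δ, hδ, hthick⟩ := (isCompact_uIcc.image_of_continuousOn
    hZ.continuousOn).exists_thickening_subset_open hU hZU.image_subset
  have hbound : ∀ᶠ σ in l, ‖B r (Y σ r) - B σ (Z w)‖ ≤
      min ‖B σ (Z w)‖ ‖B r (Y σ r)‖ * (exp |∫ τ in σ..r, M τ| - 1) := by
    filter_upwards [self_mem_nhdsWithin, hl (Metric.tendstoUniformlyOn_iff.1 hYZ δ hδ)]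
      with σ hσ hσδ
    have hsub := uIcc_subset_uIcc_sdiff_singleton hσ
    have h := hgrow σ r hsub (Y σ) ((hY σ hσ.1).1.mono (hsub.trans sdiff_subset)) fun τ hτ =>
      hthick (Metric.mem_thickening_iff.2 ⟨Z τ, mem_image_of_mem Z (hsub hτ).1,
        (dist_comm _ _).trans_lt (hσδ τ (hsub hτ).1)⟩)
    simpa only [GrowthBound, (hY σ hσ.1).2] using h
  have hBσ : Tendsto (fun σ => B σ (Z w)) l (𝓝 (B w (Z w))) := hBw.mono_left hl
  have hBY : Tendsto (fun σ => B r (Y σ r)) l (𝓝 (B r (Z r))) := (hBr.tendsto _).comp hYr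
  exact le_of_tendsto_of_tendsto (hBY.sub hBσ).norm
    ((hBσ.norm.min hBY.norm).mul
      (((continuous_exp.tendsto _).comp hMlim.abs).sub tendsto_const_nhds)) hbound

theorem GrowthOn.growthBound_of_continuousWithinAt [CompleteSpace E]
    (hgrow : GrowthOn B V M U (uIcc w r \ {w})) (hV : IsCaratheodoryVelocity V M w r)
    (hU : IsOpen U) (hBw : ContinuousWithinAt (fun t => B t (Z w)) (uIcc w r) w)
    (hB : ∀ t ∈ uIcc w r \ {w}, Continuous (B t)) (hZ : IsTrajectory V Z w r)
    (hZU : MapsTo Z (uIcc w r) U) : GrowthBound M (fun τ => B τ (Z τ)) w r := by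
  rcases eq_or_ne w r with rfl | hwr
  · exact .refl ..
  have : (𝓝[uIcc w r \ {w}] w).NeBot := accPt_principal_iff_nhdsWithin.1
    (uniqueDiffWithinAt_iff_accPt.1 (uniqueDiffOn_uIcc hwr w left_mem_uIcc))
  have hsmall : ∀ᶠ c in 𝓝[uIcc w r \ {w}] w, |∫ σ in w..c, M σ| < 1 / 2 :=
    ((tendsto_integral_nhdsWithin hV.intervalIntegrable_bound
      left_mem_uIcc).abs.eventually_lt_const (by norm_num)).filter_mono
        (nhdsWithin_mono _ sdiff_subset)
  obtain ⟨c, hc, hcI⟩ := (hsmall.and self_mem_nhdsWithin).exists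
  have hwc : uIcc w c ⊆ uIcc w r := uIcc_subset_uIcc_left hcI.1
  have hcr : uIcc c r ⊆ uIcc w r \ {w} := uIcc_subset_uIcc_sdiff_singleton hcI
  exact .trans hV.nonneg hV.intervalIntegrable_bound hcI.1
    ((hgrow.mono (sdiff_subset_sdiff_left hwc)).growthBound_of_integral_le (hV.mono hwc) hU
      (hBw.mono hwc) (hB c hcI) hc.le (hZ.mono hwc) (hZU.mono_left hwc))
    (hgrow c r hcr Z (hZ.mono (hcr.trans sdiff_subset))
      (hZU.mono_left (hcr.trans sdiff_subset)))

end GrowthOn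

section Derivatives

variable {E F : Type*} [NormedAddCommGroup E] [NormedSpace ℝ E] [NormedAddCommGroup F]
  [NormedSpace ℝ F] {U : Set E} {N : ℝ≥0} {x y : E}

theorem norm_sub_sub_fderiv_le_of_lipschitzOnWith {f : E → F} (hU : Convex ℝ U)
    (hf : ∀ z ∈ U, DifferentiableAt ℝ f z) (hf' : LipschitzOnWith N (fderiv ℝ f) U)
    (hx : x ∈ U) (hy : y ∈ U) : ‖f y - f x - fderiv ℝ f x (y - x)‖ ≤ N * ‖y - x‖ ^ 2 := by
  have hseg : segment ℝ x y ⊆ U := hU.segment_subset hx hy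
  calc ‖f y - f x - fderiv ℝ f x (y - x)‖ ≤ N * ‖y - x‖ * ‖y - x‖ := by
        refine (convex_segment x y).norm_image_sub_le_of_norm_fderiv_le'
          (fun z hz => hf z (hseg hz)) (fun z hz => ?_) (left_mem_segment ℝ x y)
          (right_mem_segment ℝ x y)
        refine (hf'.norm_sub_le (hseg hz) hx).trans ?_
        gcongr
        exact norm_sub_le_of_mem_segment hz
    _ = N * ‖y - x‖ ^ 2 := by ring

theorem norm_slope_sub_fderiv_apply_le {f : E → F} (hU : Convex ℝ U)
    (hf : ∀ z ∈ U, DifferentiableAt ℝ f z) (hf' : LipschitzOnWith N (fderiv ℝ f) U) {r : ℝ} {v : E}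
    (hr : 0 < r) (hx : x ∈ U) (hxr : x + r • v ∈ U) :
    ‖r⁻¹ • (f (x + r • v) - f x) - fderiv ℝ f x v‖ ≤ N * ‖v‖ ^ 2 * r := by
  have h := norm_sub_sub_fderiv_le_of_lipschitzOnWith hU hf hf' hx hxr
  rw [add_sub_cancel_left, map_smul, norm_smul, Real.norm_of_nonneg hr.le] at h
  rw [← inv_smul_smul₀ hr.ne' (fderiv ℝ f x v), ← smul_sub, norm_smul, norm_inv,
    Real.norm_of_nonneg hr.le, inv_mul_le_iff₀ hr]
  linarith

theorem tendsto_fderiv_apply_of_lipschitzOnWith {ι : Type*} {l : Filter ι} {f : ι → E → F}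
    {g : E → F} (hU : Convex ℝ U) (hxU : U ∈ 𝓝 x)
    (hf : ∀ᶠ i in l, ∀ z ∈ U, DifferentiableAt ℝ (f i) z)
    (hf' : ∀ᶠ i in l, LipschitzOnWith N (fderiv ℝ (f i)) U)
    (hlim : ∀ z ∈ U, Tendsto (fun i => f i z) l (𝓝 (g z))) (hg : DifferentiableAt ℝ g x) (v : E) :
    Tendsto (fun i => fderiv ℝ (f i) x v) l (𝓝 (fderiv ℝ g x v)) := by
  have hx : x ∈ U := mem_of_mem_nhds hxU
  have hline : Tendsto (fun r : ℝ => x + r • v) (𝓝[>] 0) (𝓝 x) :=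
    tendsto_nhdsWithin_of_tendsto_nhds (Continuous.tendsto' (by fun_prop) _ _ (by simp))
  have hslope : Tendsto (fun r : ℝ => r⁻¹ • (g (x + r • v) - g x)) (𝓝[>] 0)
      (𝓝 (fderiv ℝ g x v)) :=
    (hg.hasFDerivAt.hasLineDerivAt v).tendsto_slope_zero_right
  have herr : Tendsto (fun r : ℝ => N * ‖v‖ ^ 2 * r) (𝓝[>] 0) (𝓝 0) :=
    tendsto_nhdsWithin_of_tendsto_nhds (Continuous.tendsto' (by fun_prop) _ _ (by simp))
  refine Metric.tendsto_nhds.2 fun ε hε => ?_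
  obtain ⟨r, hrg, hrerr, hrU, hr⟩ :=
    ((Metric.tendsto_nhds.1 hslope (ε / 3) (by positivity)).and
      ((herr.eventually_lt_const (by positivity : 0 < ε / 3)).and
        ((hline.eventually_mem hxU).and self_mem_nhdsWithin))).exists
  have hi : Tendsto (fun i => r⁻¹ • (f i (x + r • v) - f i x)) l
      (𝓝 (r⁻¹ • (g (x + r • v) - g x))) :=
    ((hlim _ hrU).sub (hlim _ hx)).const_smul _
  filter_upwards [hf, hf', Metric.tendsto_nhds.1 hi (ε / 3) (by positivity)] with i hfi hfi' hri
  have hslopei := norm_slope_sub_fderiv_apply_le hU hfi hfi' hr hx hrU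
  rw [← dist_eq_norm, dist_comm] at hslopei
  linarith [dist_triangle4 (fderiv ℝ (f i) x v) (r⁻¹ • (f i (x + r • v) - f i x))
    (r⁻¹ • (g (x + r • v) - g x)) (fderiv ℝ g x v)]

variable {f : ℝ → E → F} {Z : ℝ → E} {S : Set ℝ} {t : ℝ} {β : F} {ζ : E}

theorem hasDerivWithinAt_fderiv_sub_of_lipschitzOnWith (hU : Convex ℝ U) (hZU : U ∈ 𝓝 (Z t))
    (ht : t ∈ S) (hf : ∀ s ∈ S, ∀ z ∈ U, DifferentiableAt ℝ (f s) z)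
    (hlip : ∀ s ∈ S, LipschitzOnWith N (f s) U)
    (hlip' : ∀ s ∈ S, LipschitzOnWith N (fderiv ℝ (f s)) U)
    (hcont : ∀ z ∈ U, ContinuousWithinAt (fun s => f s z) S t) (hZ : HasDerivAt Z ζ t) :
    HasDerivWithinAt (fun s => fderiv ℝ (f s) (Z t) (Z s - Z t)) (fderiv ℝ (f t) (Z t) ζ) S t := by
  have hmem : ∀ᶠ s in 𝓝[S \ {t}] t, s ∈ S := by
    filter_upwards [self_mem_nhdsWithin] with s hs using hs.1
  have hslope : Tendsto (slope Z t) (𝓝[S \ {t}] t) (𝓝 ζ) :=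
    hasDerivWithinAt_iff_tendsto_slope.1 hZ.hasDerivWithinAt
  have hfderiv : Tendsto (fun s => fderiv ℝ (f s) (Z t) ζ) (𝓝[S \ {t}] t)
      (𝓝 (fderiv ℝ (f t) (Z t) ζ)) :=
    tendsto_fderiv_apply_of_lipschitzOnWith hU hZU (hmem.mono hf) (hmem.mono hlip')
      (fun z hz => (hcont z hz).mono_left (nhdsWithin_mono _ sdiff_subset))
      (hf t ht _ (mem_of_mem_nhds hZU)) ζ
  have herr : Tendsto (fun s => fderiv ℝ (f s) (Z t) (slope Z t s - ζ)) (𝓝[S \ {t}] t) (𝓝 0) := by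
    refine squeeze_zero_norm' (hmem.mono fun s hs => ?_)
      (by simpa using (hslope.sub_const ζ).norm.const_mul (N : ℝ))
    exact (fderiv ℝ (f s) (Z t)).le_of_opNorm_le
      (norm_fderiv_le_of_lipschitzOn ℝ hZU (hlip s hs)) _
  have hsum := hfderiv.add herr
  rw [add_zero] at hsum
  refine hasDerivWithinAt_iff_tendsto_slope.2 (hsum.congr fun s => ?_)
  rw [← map_add, add_sub_cancel, slope_def_module, slope_def_module, sub_self, map_zero, sub_zero,
    map_smul]

theorem hasDerivWithinAt_comp_of_lipschitzOnWith (hU : Convex ℝ U) (hZU : U ∈ 𝓝 (Z t))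
    (ht : t ∈ S) (hf : ∀ s ∈ S, ∀ z ∈ U, DifferentiableAt ℝ (f s) z)
    (hlip : ∀ s ∈ S, LipschitzOnWith N (f s) U)
    (hlip' : ∀ s ∈ S, LipschitzOnWith N (fderiv ℝ (f s)) U)
    (hcont : ∀ z ∈ U, ContinuousWithinAt (fun s => f s z) S t)
    (hβ : HasDerivWithinAt (fun s => f s (Z t)) β S t) (hZ : HasDerivAt Z ζ t) :
    HasDerivWithinAt (fun s => f s (Z s)) (β + fderiv ℝ (f t) (Z t) ζ) S t := by
  have hrem : HasDerivWithinAt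
      (fun s => f s (Z s) - f s (Z t) - fderiv ℝ (f s) (Z t) (Z s - Z t)) 0 S t := by
    have hO : (fun s => f s (Z s) - f s (Z t) - fderiv ℝ (f s) (Z t) (Z s - Z t)) =O[𝓝[S] t]
        fun s => ‖s - t‖ ^ 2 := by
      refine .trans (.of_bound N ?_)
        ((hZ.isBigO_sub.mono nhdsWithin_le_nhds).norm_norm.pow 2)
      filter_upwards [self_mem_nhdsWithin, hZ.continuousAt.continuousWithinAt hZU] with s hs hZs
      rw [norm_pow, norm_norm]
      exact norm_sub_sub_fderiv_le_of_lipschitzOnWith hU (hf s hs) (hlip' s hs)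
        (mem_of_mem_nhds hZU) hZs
    have hrem' : HasFDerivWithinAt _ (0 : ℝ →L[ℝ] F) S t := hO.hasFDerivWithinAt ht one_lt_two
    simpa using hrem'.hasDerivWithinAt
  have hsum := (hβ.add (hasDerivWithinAt_fderiv_sub_of_lipschitzOnWith hU hZU ht hf hlip hlip'
    hcont hZ)).add hrem
  rw [add_zero] at hsum
  exact hsum.congr_of_mem (fun s _ => by simp) ht

end Derivatives

section Tame

variable {E F : Type*} [NormedAddCommGroup E] [NormedSpace ℝ E] [NormedAddCommGroup F]
  [NormedSpace ℝ F] {B : ℝ → E → F} {U : Set E} {N : ℝ≥0} {t : ℝ}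

/-- At the time `t`, on `U`, the constant `N` bounds `B`, its time derivative, and its first two
spatial derivatives, the latter through Lipschitz constants so that the bounds pass to pointwise
limits. -/
structure TameAt (B : ℝ → E → F) (U : Set E) (N : ℝ≥0) (t : ℝ) : Prop where
  norm_le : ∀ x ∈ U, ‖B t x‖ ≤ N
  norm_deriv_le : ∀ x ∈ U, ‖deriv (fun τ => B τ x) t‖ ≤ N
  lipschitzOnWith : LipschitzOnWith N (B t) U
  lipschitzOnWith_fderiv : LipschitzOnWith N (fderiv ℝ (B t)) U

theorem exists_tameAt {K : Set E} (hK : IsCompact K) (hKc : Convex ℝ K) (hUK : U ⊆ K)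
    (hB : ContDiff ℝ 2 (B t)) {C : ℝ} (hC : ∀ x ∈ K, ‖deriv (fun τ => B τ x) t‖ ≤ C) :
    ∃ N : ℕ, TameAt B U N t := by
  obtain ⟨C₀, hC₀⟩ := hK.exists_bound_of_continuousOn hB.continuous.continuousOn
  obtain ⟨L₀, hL₀⟩ := hB.contDiffOn.exists_lipschitzOnWith two_ne_zero hKc hK
  obtain ⟨L₁, hL₁⟩ := (hB.fderiv_right (m := 1) le_rfl).contDiffOn.exists_lipschitzOnWith
    one_ne_zero hKc hK
  obtain ⟨N, hN⟩ := exists_nat_ge (max (max C₀ C) (max L₀ L₁))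
  obtain ⟨hN₁, hN₂⟩ := max_le_iff.1 hN
  obtain ⟨⟨hC₀N, hCN⟩, hL₀N, hL₁N⟩ := And.intro (max_le_iff.1 hN₁) (max_le_iff.1 hN₂)
  exact ⟨N, fun x hx => (hC₀ x (hUK hx)).trans hC₀N, fun x hx => (hC x (hUK hx)).trans hCN,
    (hL₀.mono hUK).weaken (mod_cast hL₀N), (hL₁.mono hUK).weaken (mod_cast hL₁N)⟩

theorem TameAt.of_tendsto {l : Filter ℝ} [l.NeBot] (hUc : Convex ℝ U) (hUo : IsOpen U)
    (htame : ∀ᶠ s in l, TameAt B U N s) (hdiff : ∀ᶠ s in l, Differentiable ℝ (B s))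
    (hdiff_t : Differentiable ℝ (B t)) (hlim : ∀ x, Tendsto (fun s => B s x) l (𝓝 (B t x)))
    (hderiv : ∀ x, Tendsto (deriv fun τ => B τ x) l (𝓝 (deriv (fun τ => B τ x) t))) :
    TameAt B U N t where
  norm_le x hx := le_of_tendsto (hlim x).norm (htame.mono fun s hs => hs.norm_le x hx)
  norm_deriv_le x hx :=
    le_of_tendsto (hderiv x).norm (htame.mono fun s hs => hs.norm_deriv_le x hx)
  lipschitzOnWith := lipschitzOnWith_iff_norm_sub_le.2 fun x hx y hy =>
    le_of_tendsto ((hlim x).sub (hlim y)).norm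
      (htame.mono fun s hs => hs.lipschitzOnWith.norm_sub_le hx hy)
  lipschitzOnWith_fderiv := lipschitzOnWith_iff_norm_sub_le.2 fun x hx y hy => by
    have hfderiv : ∀ z ∈ U, ∀ v, Tendsto (fun s => fderiv ℝ (B s) z v) l
        (𝓝 (fderiv ℝ (B t) z v)) := fun z hz =>
      tendsto_fderiv_apply_of_lipschitzOnWith hUc (hUo.mem_nhds hz)
        (hdiff.mono fun s hs z _ => hs z) (htame.mono fun s hs => hs.lipschitzOnWith_fderiv)
        (fun z _ => hlim z) (hdiff_t z)
    refine ContinuousLinearMap.opNorm_le_bound _ (by positivity) fun v => ?_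
    refine le_of_tendsto ((hfderiv x hx v).sub (hfderiv y hy v)).norm (htame.mono fun s hs => ?_)
    exact (fderiv ℝ (B s) x - fderiv ℝ (B s) y).le_of_opNorm_le
      (hs.lipschitzOnWith_fderiv.norm_sub_le hx hy) v

end Tame

section Transport

variable {E F : Type*} [NormedAddCommGroup E] [NormedSpace ℝ E] [NormedAddCommGroup F]
  [NormedSpace ℝ F] {B : ℝ → E → F} {V : ℝ → E → E} {M : ℝ → ℝ} {U : Set E} {N : ℝ≥0}
  {a b t : ℝ}

/-- The field `B`, of class `C¹` in time and `C²` in space separately, is transported by the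
Carathéodory velocity `V` on the time interval `[a, b]`, up to a stretching of rate at most `M`:
its material derivative is bounded by `M ‖B‖`. -/
structure IsTransported (B : ℝ → E → F) (V : ℝ → E → E) (M : ℝ → ℝ) (a b : ℝ) : Prop
    extends IsCaratheodoryVelocity V M a b where
  contDiffOn_time : ∀ x, ContDiffOn ℝ 1 (fun t => B t x) (Icc a b)
  contDiff_space : ∀ t ∈ Icc a b, ContDiff ℝ 2 (B t)
  norm_deriv_add_fderiv_le : ∀ t ∈ Ioo a b, ∀ x,
    ‖deriv (fun τ => B τ x) t + fderiv ℝ (B t) x (V t x)‖ ≤ M t * ‖B t x‖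

namespace IsTransported

theorem hasDerivAt (hT : IsTransported B V M a b) (ht : t ∈ Ioo a b) (x : E) :
    HasDerivAt (fun τ => B τ x) (deriv (fun τ => B τ x) t) t :=
  (((hT.contDiffOn_time x).differentiableOn one_ne_zero).differentiableAt
    (Icc_mem_nhds ht.1 ht.2)).hasDerivAt

theorem continuousAt_deriv (hT : IsTransported B V M a b) (ht : t ∈ Ioo a b) (x : E) :
    ContinuousAt (deriv fun τ => B τ x) t :=
  (((hT.contDiffOn_time x).mono Ioo_subset_Icc_self).continuousOn_deriv_of_isOpen isOpen_Ioo
    le_rfl).continuousAt (Ioo_mem_nhds ht.1 ht.2)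

theorem differentiable (hT : IsTransported B V M a b) (ht : t ∈ Ioo a b) :
    Differentiable ℝ (B t) :=
  (hT.contDiff_space t (Ioo_subset_Icc_self ht)).differentiable two_ne_zero

theorem exists_tameAt_ball [FiniteDimensional ℝ E] (hT : IsTransported B V M a b)
    (ht : t ∈ Ioo a b) (R : ℝ) : ∃ N : ℕ, TameAt B (Metric.ball 0 R) N t := by
  have : ProperSpace E := FiniteDimensional.proper ℝ E
  have hB := hT.contDiff_space t (Ioo_subset_Icc_self ht)
  have hV : Continuous (V t) := hT.continuous (Icc_subset_uIcc (Ioo_subset_Icc_self ht))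
  have hcont : Continuous fun x => M t * ‖B t x‖ + ‖fderiv ℝ (B t) x (V t x)‖ :=
    (hB.continuous.norm.const_mul _).add ((hB.continuous_fderiv two_ne_zero).clm_apply hV).norm
  obtain ⟨C, hC⟩ := (isCompact_closedBall (0 : E) R).exists_bound_of_continuousOn hcont.continuousOn
  refine exists_tameAt (C := C) (isCompact_closedBall 0 R) (convex_closedBall 0 R)
    Metric.ball_subset_closedBall hB fun x hx => ?_
  calc ‖deriv (fun τ => B τ x) t‖
      ≤ ‖deriv (fun τ => B τ x) t + fderiv ℝ (B t) x (V t x)‖ + ‖fderiv ℝ (B t) x (V t x)‖ := by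
        simpa using norm_sub_le (deriv (fun τ => B τ x) t + fderiv ℝ (B t) x (V t x))
          (fderiv ℝ (B t) x (V t x))
    _ ≤ M t * ‖B t x‖ + ‖fderiv ℝ (B t) x (V t x)‖ := by
        gcongr
        exact hT.norm_deriv_add_fderiv_le t ht x
    _ ≤ C := (le_abs_self _).trans (hC x hx)

theorem tameAt_of_mem_closure (hT : IsTransported B V M a b) (hUc : Convex ℝ U) (hUo : IsOpen U)
    (ht : t ∈ Ioo a b) (hcl : t ∈ closure {s ∈ Ioo a b | TameAt B U N s}) : TameAt B U N t := by
  have : (𝓝[{s ∈ Ioo a b | TameAt B U N s}] t).NeBot := mem_closure_iff_nhdsWithin_neBot.1 hcl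
  have hmem : ∀ᶠ s in 𝓝[{s ∈ Ioo a b | TameAt B U N s}] t, s ∈ Ioo a b ∧ TameAt B U N s :=
    self_mem_nhdsWithin
  exact .of_tendsto hUc hUo (hmem.mono fun s hs => hs.2)
    (hmem.mono fun s hs => hT.differentiable hs.1) (hT.differentiable ht)
    (fun x => (hT.hasDerivAt ht x).continuousAt.continuousWithinAt)
    fun x => (hT.continuousAt_deriv ht x).continuousWithinAt

end IsTransported

end Transport

theorem exists_mem_uIcc_sdiff_singleton_subset {G : Set ℝ} (hG : IsOpen G) {w : ℝ} (hw : w ∉ G)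
    (r : ℝ) : ∃ k ∈ uIcc w r, k ∉ G ∧ uIcc k r \ {k} ⊆ G := by
  obtain ⟨k, hk, hmin⟩ := (isCompact_uIcc.diff hG).exists_isMinOn ⟨w, left_mem_uIcc, hw⟩
    (f := fun k => |r - k|) (by fun_prop)
  refine ⟨k, hk.1, hk.2, fun σ hσ => by_contra fun hσG => hσ.2 ?_⟩
  have hle : |r - k| ≤ |r - σ| := hmin ⟨uIcc_subset_uIcc_right hk.1 hσ.1, hσG⟩
  rcases mem_uIcc.1 hσ.1 with ⟨h₁, h₂⟩ | ⟨h₁, h₂⟩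
  · rw [abs_of_nonneg (by linarith), abs_of_nonneg (by linarith)] at hle
    exact le_antisymm (by linarith) h₁
  · rw [abs_of_nonpos (by linarith), abs_of_nonpos (by linarith)] at hle
    exact le_antisymm h₂ (by linarith)

theorem norm_deriv_le_of_eventually_growthBound {F : Type*} [NormedAddCommGroup F]
    [NormedSpace ℝ F] {M : ℝ → ℝ} {φ : ℝ → F} {t : ℝ} (hM : 0 ≤ M)
    (hprim : HasDerivAt (fun r => ∫ σ in t..r, M σ) (M t) t)
    (h : ∀ᶠ r in 𝓝 t, GrowthBound M φ t r) (hφ : DifferentiableAt ℝ φ t) :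
    ‖deriv φ t‖ ≤ M t * ‖φ t‖ := by
  have hexp : HasDerivAt (fun r => ‖φ t‖ * (exp (∫ σ in t..r, M σ) - 1)) (M t * ‖φ t‖) t := by
    simpa [mul_comm] using (hprim.exp.sub_const 1).const_mul ‖φ t‖
  have hmono : 𝓝[>] t ≤ 𝓝[≠] t := nhdsWithin_mono _ fun _ hr => ne_of_gt hr
  refine le_of_tendsto_of_tendsto (hφ.hasDerivAt.tendsto_slope.mono_left hmono).norm
    (hexp.tendsto_slope.mono_left hmono) ?_
  filter_upwards [nhdsWithin_le_nhds h, self_mem_nhdsWithin] with r hr htr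
  have hsub : 0 < r - t := sub_pos.2 htr
  have hgrow := hr.norm_sub_le
  rw [abs_integral_of_nonneg_of_le hM (le_of_lt htr)] at hgrow
  rw [slope_def_module, slope_def_field, norm_smul, norm_inv, Real.norm_of_nonneg hsub.le,
    intervalIntegral.integral_same, exp_zero, sub_self, mul_zero, sub_zero, ← div_eq_inv_mul]
  gcongr

section Portion

variable {E F : Type*} [NormedAddCommGroup E] [NormedSpace ℝ E] [NormedAddCommGroup F]
  [NormedSpace ℝ F] {B : ℝ → E → F} {V : ℝ → E → E} {M : ℝ → ℝ} {U : Set E} {N : ℝ≥0}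
  {a b p q r w : ℝ} {Z : ℝ → E}

theorem TameAt.norm_sub_le_of_isTrajectory (h : TameAt B U N r) (hZ : IsTrajectory V Z w r)
    (hZU : MapsTo Z (uIcc w r) U) :
    ‖B r (Z r) - B r (Z w)‖ ≤ N * |∫ σ in w..r, ‖V σ (Z σ)‖| := by
  refine (h.lipschitzOnWith.norm_sub_le (hZU right_mem_uIcc) (hZU left_mem_uIcc)).trans ?_
  rw [hZ.sub_eq w left_mem_uIcc r right_mem_uIcc]
  gcongr
  exact intervalIntegral.norm_integral_le_abs_integral_norm

theorem TameAt.eventually_norm_sub_le {β : F} {x : E} (h : TameAt B U N w)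
    (hβ : HasDerivAt (fun τ => B τ x) β w) (hx : x ∈ U) :
    ∀ᶠ k in 𝓝 w, ‖B k x - B w x‖ ≤ (N + 1) * |k - w| := by
  filter_upwards [hβ.isLittleO.bound one_pos] with k hk
  calc ‖B k x - B w x‖ ≤ ‖(k - w) • β‖ + ‖B k x - B w x - (k - w) • β‖ :=
        norm_le_norm_add_norm_sub' ..
    _ ≤ |k - w| * N + 1 * |k - w| := by
        rw [norm_smul, Real.norm_eq_abs, ← hβ.deriv]
        gcongr
        · exact h.norm_deriv_le x hx
        · simpa [hβ.deriv] using hk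
    _ = (N + 1) * |k - w| := by ring

namespace IsTransported

theorem isCaratheodoryVelocity (hT : IsTransported B V M a b) (hpq : uIcc p q ⊆ Ioo a b) :
    IsCaratheodoryVelocity V M p q :=
  hT.toIsCaratheodoryVelocity.mono (hpq.trans (Ioo_subset_Icc_self.trans Icc_subset_uIcc))

theorem growthBound_of_sdiff_singleton_subset_growthTimes [CompleteSpace E]
    (hT : IsTransported B V M a b) (hU : IsOpen U) (hwr : uIcc w r ⊆ Ioo a b)
    (hG : uIcc w r \ {w} ⊆ growthTimes B V M U) (hZ : IsTrajectory V Z w r)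
    (hZU : MapsTo Z (uIcc w r) U) : GrowthBound M (fun τ => B τ (Z τ)) w r := by
  have hV := hT.isCaratheodoryVelocity hwr
  refine (growthOn_growthTimes hT.nonneg (fun x y hxy => ?_) hG).growthBound_of_continuousWithinAt
    hV hU ?_ (fun s hs => (hT.differentiable (hwr hs.1)).continuous) hZ hZU
  · exact hV.intervalIntegrable_bound.mono_set (hxy.trans sdiff_subset)
  · exact (hT.hasDerivAt (hwr left_mem_uIcc) _).continuousAt.continuousWithinAt

theorem norm_le_of_tameAt_compl_growthTimes [CompleteSpace E] (hT : IsTransported B V M a b)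
    (hU : IsOpen U) (hpq : uIcc p q ⊆ Ioo a b)
    (htame : ∀ t ∈ uIcc p q \ growthTimes B V M U, TameAt B U N t)
    (hw : w ∈ uIcc p q \ growthTimes B V M U) (hZ : IsTrajectory V Z p q)
    (hZU : MapsTo Z (uIcc p q) U) (hr : r ∈ uIcc p q) :
    ‖B r (Z r)‖ ≤ N * exp |∫ σ in p..q, M σ| := by
  obtain ⟨k, hk, hkG, hkr⟩ := exists_mem_uIcc_sdiff_singleton_subset isOpen_growthTimes hw.2 r
  have hkpq : k ∈ uIcc p q := uIcc_subset_uIcc hw.1 hr hk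
  have hsub : uIcc k r ⊆ uIcc p q := uIcc_subset_uIcc hkpq hr
  have hV := hT.isCaratheodoryVelocity hpq
  calc ‖B r (Z r)‖ ≤ ‖B k (Z k)‖ * exp |∫ σ in k..r, M σ| :=
        (hT.growthBound_of_sdiff_singleton_subset_growthTimes hU (hsub.trans hpq) hkr
          (hZ.mono hsub) (hZU.mono_left hsub)).norm_le
    _ ≤ N * exp |∫ σ in p..q, M σ| := by
        gcongr ?_ * exp ?_
        · exact (htame k ⟨hkpq, hkG⟩).norm_le _ (hZU hkpq)
        · exact abs_integral_le_of_uIcc_subset hT.nonneg hV.intervalIntegrable_bound hsub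

theorem eventually_norm_sub_le_of_mem_growthTimes [CompleteSpace E]
    (hT : IsTransported B V M a b) (hU : IsOpen U) (hpq : uIcc p q ⊆ Ioo a b)
    (hZ : IsTrajectory V Z p q) (hZU : MapsTo Z (uIcc p q) U) (hw : w ∈ uIcc p q)
    (hwG : w ∈ growthTimes B V M U) {C : ℝ} (hC : ‖B w (Z w)‖ ≤ C) :
    ∀ᶠ r in 𝓝[uIcc p q] w, ‖B r (Z r) - B w (Z w)‖ ≤ 2 * C * |∫ σ in w..r, M σ| := by
  have hsmall : ∀ᶠ r in 𝓝[uIcc p q] w, |∫ σ in w..r, M σ| < 1 :=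
    (tendsto_integral_nhdsWithin (hT.isCaratheodoryVelocity hpq).intervalIntegrable_bound
      hw).abs.eventually_lt_const (by simp)
  filter_upwards [hsmall, self_mem_nhdsWithin,
    nhdsWithin_le_nhds (eventually_uIcc_subset (isOpen_growthTimes.mem_nhds hwG))]
    with r hr hrpq hwr
  have hsub : uIcc w r ⊆ uIcc p q := uIcc_subset_uIcc hw hrpq
  exact (hT.growthBound_of_sdiff_singleton_subset_growthTimes hU (hsub.trans hpq)
    (sdiff_subset.trans hwr) (hZ.mono hsub) (hZU.mono_left hsub)).norm_sub_le_two_mul hC hr.le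

/- Here `k` is the point of `[w, r]` outside `growthTimes` that is closest to `r`: the growth
estimate handles the passage from `k` to `r`, tameness at `k` the displacement from `Z w` to `Z k`,
and differentiability in time at `w` the passage from `w` to `k` at the fixed point `Z w`. -/
theorem eventually_norm_sub_le_of_notMem_growthTimes [CompleteSpace E]
    (hT : IsTransported B V M a b) (hU : IsOpen U) (hpq : uIcc p q ⊆ Ioo a b)
    (htame : ∀ t ∈ uIcc p q \ growthTimes B V M U, TameAt B U N t) (hZ : IsTrajectory V Z p q)
    (hZU : MapsTo Z (uIcc p q) U) (hw : w ∈ uIcc p q) (hwG : w ∉ growthTimes B V M U) {C : ℝ}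
    (hC : ∀ τ ∈ uIcc p q, ‖B τ (Z τ)‖ ≤ C) :
    ∀ᶠ r in 𝓝[uIcc p q] w, ‖B r (Z r) - B w (Z w)‖ ≤
      2 * C * |∫ σ in w..r, M σ| + N * |∫ σ in w..r, ‖V σ (Z σ)‖| + (N + 1) * |r - w| := by
  have hC0 : 0 ≤ C := (norm_nonneg _).trans (hC w hw)
  have hV := hT.isCaratheodoryVelocity hpq
  have hsmall : ∀ᶠ r in 𝓝[uIcc p q] w, |∫ σ in w..r, M σ| < 1 :=
    (tendsto_integral_nhdsWithin hV.intervalIntegrable_bound hw).abs.eventually_lt_const (by simp)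
  have htime := (htame w ⟨hw, hwG⟩).eventually_norm_sub_le (hT.hasDerivAt (hpq hw) _) (hZU hw)
  filter_upwards [hsmall, self_mem_nhdsWithin, nhdsWithin_le_nhds (eventually_uIcc_subset htime)]
    with r hr hrpq hwr
  obtain ⟨k, hk, hkG, hkr⟩ := exists_mem_uIcc_sdiff_singleton_subset isOpen_growthTimes hwG r
  have hsub : uIcc w r ⊆ uIcc p q := uIcc_subset_uIcc hw hrpq
  have hkr_sub : uIcc k r ⊆ uIcc w r := uIcc_subset_uIcc_right hk
  have hwk_sub : uIcc w k ⊆ uIcc w r := uIcc_subset_uIcc_left hk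
  have hMkr : |∫ σ in k..r, M σ| ≤ |∫ σ in w..r, M σ| := abs_integral_le_of_uIcc_subset hT.nonneg
    (hV.mono hsub).intervalIntegrable_bound hkr_sub
  have hgrow : GrowthBound M (fun τ => B τ (Z τ)) k r :=
    hT.growthBound_of_sdiff_singleton_subset_growthTimes hU ((hkr_sub.trans hsub).trans hpq) hkr
      (hZ.mono (hkr_sub.trans hsub)) (hZU.mono_left (hkr_sub.trans hsub))
  have hincr := hgrow.norm_sub_le_two_mul (hC k (hsub hk)) (hMkr.trans hr.le)
  have hspace := (htame k ⟨hsub hk, hkG⟩).norm_sub_le_of_isTrajectory (hZ.mono (hwk_sub.trans hsub))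
    (hZU.mono_left (hwk_sub.trans hsub))
  calc ‖B r (Z r) - B w (Z w)‖
      = ‖(B r (Z r) - B k (Z k)) + (B k (Z k) - B k (Z w)) + (B k (Z w) - B w (Z w))‖ := by
        congr 1; abel
    _ ≤ 2 * C * |∫ σ in k..r, M σ| + N * |∫ σ in w..k, ‖V σ (Z σ)‖| + (N + 1) * |k - w| :=
        (norm_add₃_le).trans (add_le_add (add_le_add hincr hspace) (hwr hk))
    _ ≤ 2 * C * |∫ σ in w..r, M σ| + N * |∫ σ in w..r, ‖V σ (Z σ)‖| + (N + 1) * |r - w| := by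
        gcongr 2 * C * ?_ + N * ?_ + (N + 1) * ?_
        · exact abs_integral_le_of_uIcc_subset (fun σ => norm_nonneg _)
            ((hV.mono hsub).intervalIntegrable_comp (hZ.mono hsub).continuousOn).norm hwk_sub
        · exact abs_sub_left_of_mem_uIcc hk

theorem absolutelyContinuousOnInterval [CompleteSpace E] (hT : IsTransported B V M a b)
    (hU : IsOpen U) (hpq : uIcc p q ⊆ Ioo a b)
    (htame : ∀ t ∈ uIcc p q \ growthTimes B V M U, TameAt B U N t) (hZ : IsTrajectory V Z p q)
    (hZU : MapsTo Z (uIcc p q) U) (hw : w ∈ uIcc p q \ growthTimes B V M U) :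
    AbsolutelyContinuousOnInterval (fun τ => B τ (Z τ)) p q := by
  have hV := hT.isCaratheodoryVelocity hpq
  have hVZ := (hV.intervalIntegrable_comp hZ.continuousOn).norm
  set C := N * exp |∫ σ in p..q, M σ|
  have hC : ∀ τ ∈ uIcc p q, ‖B τ (Z τ)‖ ≤ C := fun τ =>
    hT.norm_le_of_tameAt_compl_growthTimes hU hpq htame hw hZ hZU
  let g (σ : ℝ) : ℝ := 2 * C * M σ + N * ‖V σ (Z σ)‖ + (N + 1)
  have hg0 : 0 ≤ g := fun σ => add_nonneg
    (add_nonneg (mul_nonneg (by positivity) (hT.nonneg σ)) (by positivity)) (by positivity)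
  have hg : IntervalIntegrable g volume p q :=
    ((hV.intervalIntegrable_bound.const_mul _).add (hVZ.const_mul _)).add intervalIntegrable_const
  have hloc : ∀ w ∈ uIcc p q, ∀ᶠ r in 𝓝[uIcc p q] w,
      ‖B r (Z r) - B w (Z w)‖ ≤ |∫ σ in w..r, g σ| := fun w hw => by
    have hev : ∀ᶠ r in 𝓝[uIcc p q] w, ‖B r (Z r) - B w (Z w)‖ ≤
        2 * C * |∫ σ in w..r, M σ| + N * |∫ σ in w..r, ‖V σ (Z σ)‖| + (N + 1) * |r - w| := by
      by_cases hwG : w ∈ growthTimes B V M U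
      · filter_upwards [hT.eventually_norm_sub_le_of_mem_growthTimes hU hpq hZ hZU hw hwG
          (hC w hw)] with r hr
        exact hr.trans ((le_add_of_nonneg_right (by positivity)).trans_eq (add_assoc _ _ _).symm)
      · exact hT.eventually_norm_sub_le_of_notMem_growthTimes hU hpq htame hZ hZU hw hwG hC
    filter_upwards [hev, self_mem_nhdsWithin] with r hr hrpq
    have hsub : uIcc w r ⊆ uIcc p q := uIcc_subset_uIcc hw hrpq
    rwa [abs_integral_const_mul_add_const_mul_add_const hT.nonneg (fun _ => norm_nonneg _)
      (by positivity) (by positivity) (by positivity)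
      (hV.intervalIntegrable_bound.mono_set hsub) (hVZ.mono_set hsub)]
  refine absolutelyContinuousOnInterval_of_norm_sub_le_integral hg fun s hs τ hτ => ?_
  have hsub : uIcc s τ ⊆ uIcc p q := uIcc_subset_uIcc hs hτ
  exact norm_sub_le_abs_integral_of_eventually (f := fun τ => B τ (Z τ)) hg0 (hg.mono_set hsub)
    fun u hu => (hloc u (hsub hu)).filter_mono (nhdsWithin_mono u hsub)

end IsTransported

end Portion

theorem ae_uniqueDiffWithinAt (S : Set ℝ) : ∀ᵐ t, t ∈ S → UniqueDiffWithinAt ℝ S t := by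
  have hnull := (countable_setOfPred_isolated_right_within (s := S)).measure_zero volume
  filter_upwards [measure_eq_zero_iff_ae_notMem.1 hnull] with t ht htS
  have hright : (𝓝[S ∩ Ioi t] t).NeBot := ⟨fun h => ht ⟨htS, h⟩⟩
  exact uniqueDiffWithinAt_iff_accPt.2 (accPt_principal_iff_nhdsWithin.2
    (hright.mono (nhdsWithin_mono _ fun s hs => ⟨hs.1, ne_of_gt hs.2⟩)))

theorem ae_uIcc_mem_nhds (p q : ℝ) : ∀ᵐ t, t ∈ uIcc p q → uIcc p q ∈ 𝓝 t := by
  filter_upwards [Measure.ae_ne volume (min p q), Measure.ae_ne volume (max p q)] with t h₁ h₂ ht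
  exact Icc_mem_nhds (lt_of_le_of_ne ht.1 h₁.symm) (lt_of_le_of_ne ht.2 h₂)

section Baire

variable {E F : Type*} [NormedAddCommGroup E] [NormedSpace ℝ E] [NormedAddCommGroup F]
  [NormedSpace ℝ F] {B : ℝ → E → F} {V : ℝ → E → E} {M : ℝ → ℝ} {U : Set E} {N : ℝ≥0}
  {a b p q t : ℝ} {Z : ℝ → E}

theorem IsTrajectory.ae_hasDerivAt [CompleteSpace E] (hZ : IsTrajectory V Z p q)
    (hint : IntervalIntegrable (fun t => V t (Z t)) volume p q) :
    ∀ᵐ t, t ∈ uIcc p q → HasDerivAt Z (V t (Z t)) t := by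
  filter_upwards [hint.ae_hasDerivAt_integral, ae_uIcc_mem_nhds p q] with t ht hnhds htI
  refine ((ht htI p left_mem_uIcc).const_add (Z p)).congr_of_eventuallyEq ?_
  filter_upwards [hnhds htI] with τ hτ
  rw [← hZ.sub_eq p left_mem_uIcc τ hτ, add_sub_cancel]

namespace IsTransported

/- The chain rule only gives the derivative within `S`, which determines the full derivative at the
times where `S` accumulates. -/
theorem norm_deriv_le_of_tameAt {S : Set ℝ} (hT : IsTransported B V M a b) (hUc : Convex ℝ U)
    (hU : IsOpen U) (hS : S ⊆ Ioo a b) (htame : ∀ s ∈ S, TameAt B U N s) (ht : t ∈ S)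
    (huniq : UniqueDiffWithinAt ℝ S t) (hZt : Z t ∈ U) (hZ : HasDerivAt Z (V t (Z t)) t)
    (hφ : DifferentiableAt ℝ (fun τ => B τ (Z τ)) t) :
    ‖deriv (fun τ => B τ (Z τ)) t‖ ≤ M t * ‖B t (Z t)‖ := by
  have hchain := hasDerivWithinAt_comp_of_lipschitzOnWith hUc (hU.mem_nhds hZt) ht
    (fun s hs z _ => hT.differentiable (hS hs) z) (fun s hs => (htame s hs).lipschitzOnWith)
    (fun s hs => (htame s hs).lipschitzOnWith_fderiv)
    (fun z _ => (hT.hasDerivAt (hS ht) z).continuousAt.continuousWithinAt)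
    (hT.hasDerivAt (hS ht) (Z t)).hasDerivWithinAt hZ
  rw [huniq.eq_deriv _ hφ.hasDerivAt.hasDerivWithinAt hchain]
  exact hT.norm_deriv_add_fderiv_le t (hS ht) (Z t)

theorem ae_norm_deriv_le [CompleteSpace E] (hT : IsTransported B V M a b) (hUc : Convex ℝ U)
    (hU : IsOpen U) (hpq : uIcc p q ⊆ Ioo a b)
    (htame : ∀ t ∈ uIcc p q \ growthTimes B V M U, TameAt B U N t) (hZ : IsTrajectory V Z p q)
    (hZU : MapsTo Z (uIcc p q) U) :
    ∀ᵐ t, t ∈ uIcc p q → DifferentiableAt ℝ (fun τ => B τ (Z τ)) t →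
      ‖deriv (fun τ => B τ (Z τ)) t‖ ≤ M t * ‖B t (Z t)‖ := by
  have hV := hT.isCaratheodoryVelocity hpq
  filter_upwards [hZ.ae_hasDerivAt (hV.intervalIntegrable_comp hZ.continuousOn),
    hV.intervalIntegrable_bound.ae_hasDerivAt_integral, ae_uIcc_mem_nhds p q,
    ae_uniqueDiffWithinAt (uIcc p q \ growthTimes B V M U)] with t hZt hMt hnhds huniq htI hφ
  by_cases htG : t ∈ growthTimes B V M U
  · refine norm_deriv_le_of_eventually_growthBound hT.nonneg (hMt htI t htI) ?_ hφ
    filter_upwards [eventually_uIcc_subset (hnhds htI),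
      eventually_uIcc_subset (isOpen_growthTimes.mem_nhds htG)] with r hrI hrG
    exact hT.growthBound_of_sdiff_singleton_subset_growthTimes hU (hrI.trans hpq)
      (sdiff_subset.trans hrG) (hZ.mono hrI) (hZU.mono_left hrI)
  · exact hT.norm_deriv_le_of_tameAt hUc hU (sdiff_subset.trans hpq) htame ⟨htI, htG⟩
      (huniq ⟨htI, htG⟩) (hZU htI) (hZt htI) hφ

theorem growthOn_of_tameAt_compl_growthTimes [CompleteSpace E] [FiniteDimensional ℝ F] {I : Set ℝ}
    (hT : IsTransported B V M a b) (hUc : Convex ℝ U) (hU : IsOpen U) (hI : I ⊆ Ioo a b)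
    (htame : ∀ t ∈ I \ growthTimes B V M U, TameAt B U N t) : GrowthOn B V M U I := by
  intro p q hpqI Z hZ hZU
  have hpq := hpqI.trans hI
  by_cases hG : uIcc p q ⊆ growthTimes B V M U
  · exact hT.growthBound_of_sdiff_singleton_subset_growthTimes hU hpq (sdiff_subset.trans hG)
      hZ hZU
  obtain ⟨w, hw⟩ := not_subset.1 hG
  have htame_pq : ∀ t ∈ uIcc p q \ growthTimes B V M U, TameAt B U N t := fun t ht =>
    htame t ⟨hpqI ht.1, ht.2⟩
  refine growthBound_of_norm_deriv_le hT.nonneg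
    (hT.isCaratheodoryVelocity hpq).intervalIntegrable_bound
    (hT.absolutelyContinuousOnInterval hU hpq htame_pq hZ hZU hw) ?_
  filter_upwards [hT.ae_norm_deriv_le hUc hU hpq htame_pq hZ hZU] with t ht htI
  exact ht (uIoc_subset_uIcc htI)

theorem Ioo_subset_growthTimes [FiniteDimensional ℝ E] [FiniteDimensional ℝ F]
    (hT : IsTransported B V M a b) (R : ℝ) :
    Ioo a b ⊆ growthTimes B V M (Metric.ball 0 R) := by
  have : CompleteSpace E := FiniteDimensional.complete ℝ E
  by_contra hsub
  set K := Ioo a b \ growthTimes B V M (Metric.ball 0 R)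
  have : Nonempty K := (sdiff_nonempty.2 hsub).to_subtype
  have : LocallyCompactSpace K := (isOpen_Ioo.isLocallyClosed.inter
    isOpen_growthTimes.isClosed_compl.isLocallyClosed).locallyCompactSpace
  have hclosed : ∀ N : ℕ, IsClosed {s : K | TameAt B (Metric.ball 0 R) N s} := fun N =>
    isClosed_of_closure_subset fun s hs =>
      hT.tameAt_of_mem_closure (convex_ball 0 R) Metric.isOpen_ball s.2.1
        (map_mem_closure continuous_subtype_val hs fun s' hs' => ⟨s'.2.1, hs'⟩)
  have hcover : ⋃ N : ℕ, {s : K | TameAt B (Metric.ball 0 R) N s} = univ :=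
    eq_univ_of_forall fun s => mem_iUnion.2 (hT.exists_tameAt_ball s.2.1 R)
  obtain ⟨N, ⟨t, htI, htG⟩, ht⟩ := nonempty_interior_of_iUnion_of_closed hclosed hcover
  obtain ⟨O, hO, hOt⟩ := (mem_nhds_subtype K _ _).1 (mem_interior_iff_mem_nhds.1 ht)
  refine htG ⟨O ∩ Ioo a b, inter_mem hO (Ioo_mem_nhds htI.1 htI.2), ?_⟩
  exact hT.growthOn_of_tameAt_compl_growthTimes (convex_ball 0 R) Metric.isOpen_ball
    inter_subset_right fun s hs => hOt (a := ⟨s, hs.1.2, hs.2⟩) hs.1.1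

theorem growthBound [FiniteDimensional ℝ E] [FiniteDimensional ℝ F]
    (hT : IsTransported B V M a b) (hab : a ≤ b) (hZ : IsTrajectory V Z a b) :
    GrowthBound M (fun τ => B τ (Z τ)) a b := by
  rcases hab.eq_or_lt with rfl | hab
  · exact .refl ..
  have : CompleteSpace E := FiniteDimensional.complete ℝ E
  obtain ⟨R, hR⟩ := (isCompact_uIcc.image_of_continuousOn hZ.continuousOn).isBounded.subset_ball 0
  have hZR : MapsTo Z (uIcc a b) (Metric.ball 0 R) := mapsTo_iff_image_subset.2 hR
  have hgrow : GrowthOn B V M (Metric.ball 0 R) (Ioo a b) := growthOn_growthTimes hT.nonneg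
    (fun p q hpq => (hT.isCaratheodoryVelocity hpq).intervalIntegrable_bound)
    (hT.Ioo_subset_growthTimes R)
  obtain ⟨m, ham, hmb⟩ := exists_between hab
  have hend : ∀ w ∈ Icc a b, uIcc w m \ {w} ⊆ Ioo a b →
      GrowthBound M (fun τ => B τ (Z τ)) w m := fun w hw hwm => by
    have hsub : uIcc w m ⊆ Icc a b := uIcc_subset_Icc hw ⟨ham.le, hmb.le⟩
    have hsub' := hsub.trans Icc_subset_uIcc
    exact (hgrow.mono hwm).growthBound_of_continuousWithinAt
      (hT.toIsCaratheodoryVelocity.mono hsub') Metric.isOpen_ball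
      ((hT.contDiffOn_time _).continuousOn.continuousWithinAt hw |>.mono hsub)
      (fun s hs => (hT.contDiff_space s (hsub hs.1)).continuous) (hZ.mono hsub')
      (hZR.mono_left hsub')
  refine .trans hT.nonneg hT.intervalIntegrable_bound (Icc_subset_uIcc ⟨ham.le, hmb.le⟩)
    (hend a (left_mem_Icc.2 hab.le) ?_) (hend b (right_mem_Icc.2 hab.le) ?_).symm
  · rw [uIcc_of_le ham.le, Icc_sdiff_left]
    exact fun s hs => ⟨hs.1, hs.2.trans_lt hmb⟩
  · rw [uIcc_of_ge hmb.le, Icc_sdiff_right]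
    exact fun s hs => ⟨ham.trans_le hs.1, hs.2⟩

end IsTransported

end Baire

theorem aestronglyMeasurable_fderiv_apply {α E F : Type*} [MeasurableSpace α] {μ : Measure α}
    [NormedAddCommGroup E] [NormedSpace ℝ E] [NormedAddCommGroup F] [NormedSpace ℝ F]
    {B : α → E → F} (hB : ∀ x, AEStronglyMeasurable (fun t => B t x) μ) {x : E}
    (hdiff : ∀ᵐ t ∂μ, DifferentiableAt ℝ (B t) x) (v : E) :
    AEStronglyMeasurable (fun t => fderiv ℝ (B t) x v) μ := by
  refine aestronglyMeasurable_of_tendsto_ae atTop (f := fun (n : ℕ) t =>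
    (n : ℝ) • (B t (x + (n : ℝ)⁻¹ • v) - B t x))
    (fun n => ((hB _).sub (hB x)).const_smul (n : ℝ)) ?_
  filter_upwards [hdiff] with t ht
  exact (ht.hasFDerivAt.lim_real v).comp tendsto_natCast_atTop_atTop

theorem IsTrajectory.of_hasDerivWithinAt {E : Type*} [NormedAddCommGroup E] [NormedSpace ℝ E]
    [CompleteSpace E] {V : ℝ → E → E} {Z : ℝ → E} {a b : ℝ}
    (hZ : ∀ t ∈ uIcc a b, HasDerivWithinAt Z (V t (Z t)) (uIcc a b) t)
    (hint : IntervalIntegrable (fun t => V t (Z t)) volume a b) : IsTrajectory V Z a b where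
  continuousOn t ht := (hZ t ht).continuousWithinAt
  sub_eq s hs τ hτ := by
    have hsub : uIcc s τ ⊆ uIcc a b := uIcc_subset_uIcc hs hτ
    refine (intervalIntegral.integral_eq_sub_of_hasDeriv_right
      (fun t ht => ((hZ t (hsub ht)).continuousWithinAt.mono hsub))
      (fun t ht => ?_) (hint.mono_set hsub)).symm
    exact ((hZ t (hsub (Ioo_subset_Icc_self ht))).hasDerivAt
      (mem_of_superset (Icc_mem_nhds ht.1 ht.2) hsub)).hasDerivWithinAt

section Curl

open EuclideanSpace (single)

variable {F u v : R3 → R3} {x : R3}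

theorem toR3_apply (w : Fin 3 → ℝ) (i : Fin 3) : toR3 w i = w i := rfl

theorem pd_apply (hF : DifferentiableAt ℝ F x) (i j : Fin 3) :
    pd j (fun y => F y i) x = fderiv ℝ F x (single j 1) i :=
  congrArg (· (single j 1)) ((EuclideanSpace.proj (𝕜 := ℝ) i).hasFDerivAt.comp x
    hF.hasFDerivAt).fderiv

theorem pd_mul_sub_mul {f g h k : R3 → ℝ} (hf : DifferentiableAt ℝ f x)
    (hg : DifferentiableAt ℝ g x) (hh : DifferentiableAt ℝ h x) (hk : DifferentiableAt ℝ k x)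
    (j : Fin 3) : pd j (fun y => f y * g y - h y * k y) x =
      pd j f x * g x + f x * pd j g x - pd j h x * k x - h x * pd j k x := by
  have h := ((hf.hasFDerivAt.mul hg.hasFDerivAt).sub (hh.hasFDerivAt.mul hk.hasFDerivAt)).fderiv
  refine (congrArg (· (single j 1)) h).trans ?_
  simp only [pd, sub_apply, add_apply, smul_apply, smul_eq_mul]
  ring

theorem fderiv_apply_coord (i : Fin 3) (w : R3) (hF : DifferentiableAt ℝ F x) :
    fderiv ℝ F x w i = ∑ j, w j * pd j (fun y => F y i) x := by
  conv_lhs => rw [← (EuclideanSpace.basisFun (Fin 3) ℝ).sum_repr w]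
  simp [pd_apply hF]

/-- The curl as a function of the Jacobian matrix, by `curl_eq_curlCLM`. -/
def curlCLM : (R3 →L[ℝ] R3) →L[ℝ] R3 :=
  LinearMap.toContinuousLinearMap
    { toFun := fun D => toR3 ![D (single 1 1) 2 - D (single 2 1) 1,
        D (single 2 1) 0 - D (single 0 1) 2, D (single 0 1) 1 - D (single 1 1) 0]
      map_add' := fun D D' => by
        ext i; fin_cases i <;> simp [toR3_apply] <;> ring
      map_smul' := fun c D => by
        ext i; fin_cases i <;> simp [toR3_apply] <;> ring }

theorem curlCLM_apply (D : R3 →L[ℝ] R3) :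
    curlCLM D = toR3 ![D (single 1 1) 2 - D (single 2 1) 1,
      D (single 2 1) 0 - D (single 0 1) 2, D (single 0 1) 1 - D (single 1 1) 0] := rfl

theorem curl_eq_curlCLM (hF : DifferentiableAt ℝ F x) : curl F x = curlCLM (fderiv ℝ F x) := by
  simp only [curl, pd_apply hF, curlCLM_apply]

theorem curl_eq_curlCLM_comp (hF : Differentiable ℝ F) : curl F = curlCLM ∘ fderiv ℝ F :=
  funext fun x => curl_eq_curlCLM (hF x)

theorem contDiff_curl (hF : ContDiff ℝ 2 F) : ContDiff ℝ 1 (curl F) := by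
  rw [curl_eq_curlCLM_comp (hF.differentiable two_ne_zero)]
  exact curlCLM.contDiff.comp (hF.fderiv_right (m := 1) le_rfl)

theorem divg_curl (hF : ContDiff ℝ 2 F) (x : R3) : divg (curl F) x = 0 := by
  have hfderiv : fderiv ℝ (curl F) x = curlCLM ∘L fderiv ℝ (fderiv ℝ F) x := by
    rw [curl_eq_curlCLM_comp (hF.differentiable two_ne_zero)]
    exact (curlCLM.hasFDerivAt.comp x (((hF.fderiv_right (m := 1) le_rfl).differentiable
      one_ne_zero) x).hasFDerivAt).fderiv
  have hsymm : IsSymmSndFDerivAt ℝ F x := hF.contDiffAt.isSymmSndFDerivAt (by simp)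
  have hcurl : DifferentiableAt ℝ (curl F) x := (contDiff_curl hF).differentiable one_ne_zero x
  simp only [divg, pd_apply hcurl, hfderiv, ContinuousLinearMap.comp_apply, curlCLM_apply,
    toR3_apply]
  simp [hsymm (single 1 1) (single 0 1), hsymm (single 2 1) (single 0 1),
    hsymm (single 2 1) (single 1 1)]

theorem curl_cross (hu : DifferentiableAt ℝ u x) (hv : DifferentiableAt ℝ v x) :
    curl (fun y => cross (u y) (v y)) x =
      fderiv ℝ u x (v x) - fderiv ℝ v x (u x) + divg v x • u x - divg u x • v x := by
  have hui : ∀ i, DifferentiableAt ℝ (fun y => u y i) x := differentiableAt_euclidean.1 hu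
  have hvi : ∀ i, DifferentiableAt ℝ (fun y => v y i) x := differentiableAt_euclidean.1 hv
  ext i
  simp only [PiLp.sub_apply, PiLp.add_apply, PiLp.smul_apply, fderiv_apply_coord _ _ hu,
    fderiv_apply_coord _ _ hv, Fin.sum_univ_three, smul_eq_mul, divg]
  fin_cases i <;>
    simp [curl, cross, toR3_apply, pd_mul_sub_mul, hui, hvi] <;> ring

theorem IsEMHDAt.deriv_eq {B : ℝ → R3 → R3} {t : ℝ} (h : IsEMHDAt B t x)
    (hB : ContDiff ℝ 2 (B t)) :
    deriv (fun τ => B τ x) t =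
      fderiv ℝ (B t) x (curl (B t) x) - fderiv ℝ (curl (B t)) x (B t x) := by
  rw [eq_neg_of_add_eq_zero_left h.1, curl_cross ((contDiff_curl hB).differentiable one_ne_zero x)
    (hB.differentiable two_ne_zero x), h.2, divg_curl hB]
  simp

theorem aestronglyMeasurable_curl {α : Type*} [MeasurableSpace α] {μ : Measure α}
    {B : α → R3 → R3} (hB : ∀ x, AEStronglyMeasurable (fun t => B t x) μ)
    (hdiff : ∀ᵐ t ∂μ, DifferentiableAt ℝ (B t) x) :
    AEStronglyMeasurable (fun t => curl (B t) x) μ := by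
  let φ (w : Fin 3 → R3) : R3 := toR3 ![w 1 2 - w 2 1, w 2 0 - w 0 2, w 0 1 - w 1 0]
  have hφ : Continuous φ := (PiLp.continuous_toLp 2 _).comp (by fun_prop)
  have hcols : AEStronglyMeasurable (fun t j => fderiv ℝ (B t) x (single j 1)) μ :=
    (aemeasurable_pi_lambda _ fun j =>
      (aestronglyMeasurable_fderiv_apply hB hdiff (single j 1)).aemeasurable).aestronglyMeasurable
  refine (hφ.comp_aestronglyMeasurable hcols).congr ?_
  filter_upwards [hdiff] with t ht using (curl_eq_curlCLM ht).symm

theorem norm_curl_sub_le {L : ℝ} (hF : ContDiff ℝ 2 F) (hL : ∀ x, ‖fderiv ℝ (curl F) x‖ ≤ L)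
    (x y : R3) : ‖curl F x - curl F y‖ ≤ L * ‖x - y‖ :=
  convex_univ.norm_image_sub_le_of_norm_fderiv_le
    (fun z _ => (contDiff_curl hF).differentiable one_ne_zero z) (fun z _ => hL z)
    (mem_univ y) (mem_univ x)

end Curl

section ElectronMHD

variable {B : ℝ → R3 → R3} {M : ℝ → ℝ} {X : ℝ → R3} {a b : ℝ}

theorem isCaratheodoryVelocity_neg_curl (hab : a ≤ b)
    (hBt : ∀ x, ContinuousOn (fun t => B t x) (Icc a b))
    (hBx : ∀ t ∈ Icc a b, ContDiff ℝ 2 (B t)) (hM0 : 0 ≤ M)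
    (hM : ∀ t ∈ Icc a b, ∀ x, ‖fderiv ℝ (curl (B t)) x‖ ≤ M t)
    (hMint : IntervalIntegrable M volume a b) (hX : ContinuousOn X (Icc a b))
    (hXint : IntervalIntegrable (fun t => -curl (B t) (X t)) volume a b) :
    IsCaratheodoryVelocity (fun t x => -curl (B t) x) M a b := by
  have hlip : ∀ t ∈ Icc a b, ∀ x y,
      ‖-curl (B t) x - -curl (B t) y‖ ≤ M t * ‖x - y‖ := fun t ht x y => by
    rw [neg_sub_neg, norm_sub_rev]
    exact norm_curl_sub_le (hBx t ht) (hM t ht) x y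
  refine ⟨hM0, hMint, fun x => ?_, uIcc_of_le hab ▸ hlip⟩
  have hmem : ∀ᵐ t ∂volume.restrict (uIoc a b), t ∈ Icc a b := by
    filter_upwards [ae_restrict_mem measurableSet_uIoc] with t ht
    exact Ioc_subset_Icc_self (uIoc_of_le hab ▸ ht)
  have hbound : IntervalIntegrable (fun t => ‖-curl (B t) (X t)‖ + M t * ‖x - X t‖) volume a b :=
    hXint.norm.add (hMint.mul_continuousOn (uIcc_of_le hab ▸ (continuousOn_const.sub hX).norm))
  refine hbound.mono_fun' (aestronglyMeasurable_curl (fun y => ?_)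
    (hmem.mono fun t ht => (hBx t ht).differentiable two_ne_zero x)).neg (hmem.mono fun t ht => ?_)
  · exact ((hBt y).mono (uIoc_of_le hab ▸ Ioc_subset_Icc_self)).aestronglyMeasurable
      measurableSet_uIoc
  · exact (norm_le_norm_add_norm_sub' _ _).trans (add_le_add_right (hlip t ht x (X t)) _)

theorem isTransported_neg_curl (hab : a ≤ b)
    (hBt : ∀ x, ContDiffOn ℝ 1 (fun t => B t x) (Icc a b))
    (hBx : ∀ t ∈ Icc a b, ContDiff ℝ 2 (B t)) (hB : ∀ t ∈ Ioo a b, ∀ x, IsEMHDAt B t x)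
    (hM0 : 0 ≤ M) (hM : ∀ t ∈ Icc a b, ∀ x, ‖fderiv ℝ (curl (B t)) x‖ ≤ M t)
    (hMint : IntervalIntegrable M volume a b) (hX : ContinuousOn X (Icc a b))
    (hXint : IntervalIntegrable (fun t => -curl (B t) (X t)) volume a b) :
    IsTransported B (fun t x => -curl (B t) x) M a b where
  toIsCaratheodoryVelocity := isCaratheodoryVelocity_neg_curl hab (fun x => (hBt x).continuousOn)
    hBx hM0 hM hMint hX hXint
  contDiffOn_time := hBt
  contDiff_space := hBx
  norm_deriv_add_fderiv_le t ht x := by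
    have ht' := Ioo_subset_Icc_self ht
    rw [(hB t ht x).deriv_eq (hBx t ht'), map_neg, sub_add_eq_add_sub, add_neg_cancel, zero_sub,
      norm_neg]
    exact (fderiv ℝ (curl (B t)) x).le_of_opNorm_le (hM t ht' x) _

end ElectronMHD

/-- two-sided exponential bounds for |B| along a trajectory of -J. -/
theorem norm_B_along_trajectory_bounds (T : ℝ) (hT : 0 < T) (B : ℝ → R3 → R3)
    (hBt : ∀ x, ContDiffOn ℝ 1 (fun t => B t x) (Set.Ico 0 T))
    (hBx : ∀ t ∈ Set.Ico 0 T, ContDiff ℝ 2 (B t))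
    (hB : ∀ t ∈ Set.Ico 0 T, ∀ x, IsEMHDAt B t x)
    (M : ℝ → ℝ)
    (hMdef : ∀ τ, M τ = ⨆ x : R3, ‖fderiv ℝ (fun y => curl (B τ) y) x‖)
    (hMbdd : ∀ τ ∈ Set.Ico 0 T,
      BddAbove (Set.range fun x : R3 => ‖fderiv ℝ (fun y => curl (B τ) y) x‖))
    (hMint : ∀ t ∈ Set.Ioo 0 T, IntervalIntegrable M volume 0 t)
    (a : R3) (X : ℝ → R3) (hX0 : X 0 = a)
    (hXC1 : ContDiffOn ℝ 1 X (Set.Ico 0 T))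
    (hX : ∀ t ∈ Set.Ico 0 T,
      HasDerivWithinAt X (-(curl (B t) (X t))) (Set.Ico 0 T) t)
    (t : ℝ) (ht : t ∈ Set.Ioo 0 T)
    (hne : ∀ τ ∈ Set.Icc 0 t, B τ (X τ) ≠ 0) :
    ‖B 0 a‖ * Real.exp (-∫ τ in (0:ℝ)..t, M τ) ≤ ‖B t (X t)‖ ∧
      ‖B t (X t)‖ ≤ ‖B 0 a‖ * Real.exp (∫ τ in (0:ℝ)..t, M τ) := by
  have hsub : Icc 0 t ⊆ Ico 0 T := Icc_subset_Ico_right ht.2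
  have hI : uIcc 0 t = Icc 0 t := uIcc_of_le ht.1.le
  have hX' : ContinuousOn (fun s => -curl (B s) (X s)) (Icc 0 t) :=
    ((hXC1.continuousOn_derivWithin (uniqueDiffOn_Ico 0 T) le_rfl).congr fun s hs =>
      ((hX s hs).derivWithin (uniqueDiffOn_Ico 0 T s hs)).symm).mono hsub
  have hXint := hX'.intervalIntegrable_of_Icc ht.1.le (μ := volume)
  have hM0 : 0 ≤ M := fun τ => hMdef τ ▸ Real.iSup_nonneg fun x => norm_nonneg _
  have hM : ∀ τ ∈ Icc 0 t, ∀ x, ‖fderiv ℝ (curl (B τ)) x‖ ≤ M τ := fun τ hτ x =>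
    hMdef τ ▸ le_ciSup (hMbdd τ (hsub hτ)) x
  have hZ : IsTrajectory (fun s x => -curl (B s) x) X 0 t :=
    .of_hasDerivWithinAt (fun s hs => (hX s (hsub (hI ▸ hs))).mono (hI ▸ hsub)) hXint
  have hgrow : GrowthBound M (fun τ => B τ (X τ)) 0 t :=
    (isTransported_neg_curl ht.1.le (fun x => (hBt x).mono hsub) (fun s hs => hBx s (hsub hs))
      (fun s hs => hB s (hsub (Ioo_subset_Icc_self hs))) hM0 hM (hMint t ht)
      (hXC1.continuousOn.mono hsub) hXint).growthBound ht.1.le hZ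
  have hlower := hgrow.symm.norm_le
  have hupper := hgrow.norm_le
  rw [abs_integral_comm] at hlower
  rw [abs_integral_of_nonneg_of_le hM0 ht.1.le, hX0] at hlower hupper
  exact ⟨by rwa [exp_neg, ← div_eq_mul_inv, div_le_iff₀ (exp_pos _)], hupper⟩
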